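/- arXiv:math/0412067 — 11 statements merged into one kernel-verified Lean document; each statement's English description precedes it below -/
import Mathlib

section
/- Let q be real with 0 < q < 1, let r ≥ 1 be an integer, let s, t ∈ ℂ with Re(t) > r − 1, and let z ∈ ℂ with Re(z) > 0. Then the multiple series defining ζ_{q,r}(s,t,z) can be rearranged as a single series: ζ_{q,r}(s,t,z) = ∑_{n=0}^{∞} [n+r−1; r−1]_q · q^{n(t−r+1)} / [n+z]_q^s, and both series converge absolutely. -/
/-!
Group the `r`-tuples `f` by their sum `n`, and put `k = r - 1`. On the tuples of sum `n` the
denominator is constant and the numerator is `q^{n(t-k)} · q^{∑ f_i (k-i)}`, so everything rests on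
the generating-function identity `∑_{f_0+⋯+f_k = n} q^{∑ f_i (k-i)} = [n+k; k]_q`
(`sum_antidiagonalTuple_qpow`). It is proved by induction on `k`, splitting off `f_0`; the inner sum
over `f_0` is evaluated by the `q`-Pascal rule (`qBinom_pascal`).

The single series converges absolutely because `[n+k; k]_q ≤ 1/(q;q)_k`, because
`[n+z]_q → 1/(1-q)`, which lies in the slit plane, so that `1/[n+z]_q^s` is bounded, and because
`q^{n(t-k)}` decays geometrically. Since the identity has positive terms, the norms of the multiple
series sum over each group to the norm of the corresponding term of the single series; this gives
the absolute convergence of the multiple series, and hence permits the rearrangement.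
-/

open Complex

/-- `[w]_q = (1 - q^w)/(1 - q)` for real `0 < q < 1` and complex `w`
(principal complex power of the positive real `q`). -/
noncomputable def qNum (q : ℝ) (w : ℂ) : ℂ := (1 - (q : ℂ) ^ w) / (1 - (q : ℂ))

/-- The q-Pochhammer symbol `(a;q)_m = ∏_{j=0}^{m-1} (1 - a q^j)`. -/
noncomputable def qPoch (q a : ℝ) (m : ℕ) : ℝ := ∏ j ∈ Finset.range m, (1 - a * q ^ j)

/-- The q-binomial coefficient `[m; n]_q = (q;q)_m / ((q;q)_n (q;q)_{m-n})`. -/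
noncomputable def qBinom (q : ℝ) (m n : ℕ) : ℝ :=
  qPoch q q m / (qPoch q q n * qPoch q q (m - n))

/-- The `q`-analogue `ζ_{q,r}(s,t,z)` of the Barnes multiple zeta function,
defined as a sum over all `r`-tuples `(n₁,…,n_r)` of nonnegative integers of
`q^{n₁ t + n₂(t−1) + ⋯ + n_r(t−r+1)} / [n₁+⋯+n_r+z]_q^s`. -/
noncomputable def zetaQ (q : ℝ) (r : ℕ) (s t z : ℂ) : ℂ :=
  ∑' f : Fin r → ℕ,
    (q : ℂ) ^ (∑ i : Fin r, (f i : ℂ) * (t - (i : ℕ)))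
      / (qNum q (((∑ i : Fin r, f i : ℕ) : ℂ) + z)) ^ s

open Finset.Nat (antidiagonalTuple mem_antidiagonalTuple sigmaAntidiagonalTupleEquivTuple)

open Filter Topology

/-! ### The q-binomial coefficient -/

lemma qPoch_pos {q : ℝ} (hq0 : 0 < q) (hq1 : q < 1) (m : ℕ) : 0 < qPoch q q m := by
  refine Finset.prod_pos fun j _ => ?_
  have : q ^ (j + 1) < 1 := pow_lt_one₀ hq0.le hq1 (by omega)
  rw [pow_succ'] at this
  linarith

lemma qPoch_succ (q : ℝ) (m : ℕ) : qPoch q q (m + 1) = qPoch q q m * (1 - q ^ (m + 1)) := by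
  simp only [qPoch]
  rw [Finset.prod_range_succ, pow_succ']

lemma qPoch_anti {q : ℝ} (hq0 : 0 < q) (hq1 : q < 1) : Antitone (qPoch q q) := by
  refine antitone_nat_of_succ_le fun m => ?_
  rw [qPoch_succ]
  have h1 := qPoch_pos hq0 hq1 m
  have h2 : 0 < q ^ (m + 1) := by positivity
  nlinarith

lemma qBinom_nonneg {q : ℝ} (hq0 : 0 < q) (hq1 : q < 1) (m n : ℕ) : 0 ≤ qBinom q m n :=
  div_nonneg (qPoch_pos hq0 hq1 _).le
    (mul_pos (qPoch_pos hq0 hq1 _) (qPoch_pos hq0 hq1 _)).le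

lemma qBinom_le {q : ℝ} (hq0 : 0 < q) (hq1 : q < 1) (n k : ℕ) :
    qBinom q (n + k) k ≤ 1 / qPoch q q k := by
  have h1 := qPoch_pos hq0 hq1 k
  have h2 := qPoch_pos hq0 hq1 n
  have h3 := qPoch_anti hq0 hq1 (Nat.le_add_right n k)
  rw [qBinom, Nat.add_sub_cancel, div_le_div_iff₀ (by positivity) h1]
  nlinarith

lemma qBinom_zero_right {q : ℝ} (hq0 : 0 < q) (hq1 : q < 1) (n : ℕ) : qBinom q n 0 = 1 := by
  have := (qPoch_pos hq0 hq1 n).ne'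
  simpa [qBinom, qPoch] using this

lemma qBinom_self {q : ℝ} (hq0 : 0 < q) (hq1 : q < 1) (n : ℕ) : qBinom q n n = 1 := by
  have := (qPoch_pos hq0 hq1 n).ne'
  simpa [qBinom, qPoch] using this

/-- The `q`-Pascal rule. -/
lemma qBinom_pascal {q : ℝ} (hq0 : 0 < q) (hq1 : q < 1) (n k : ℕ) :
    qBinom q (n + 1 + (k + 1)) (k + 1) =
      qBinom q (n + 1 + k) k + q ^ (k + 1) * qBinom q (n + (k + 1)) (k + 1) := by
  have e : n + (k + 1) = n + 1 + k := by ring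
  simp only [qBinom, Nat.add_sub_cancel]
  rw [show n + 1 + (k + 1) = (n + 1 + k) + 1 by ring, e, qPoch_succ, qPoch_succ q k, qPoch_succ q n]
  have h1 := (qPoch_pos hq0 hq1 k).ne'
  have h2 := (qPoch_pos hq0 hq1 n).ne'
  have h (m : ℕ) : 1 - q ^ (m + 1) ≠ 0 :=
    (sub_pos.2 (pow_lt_one₀ hq0.le hq1 (by omega))).ne'
  have h3 := h k
  have h4 := h n
  field_simp
  ring

lemma sum_antidiagonal_qBinom {q : ℝ} (hq0 : 0 < q) (hq1 : q < 1) (k n : ℕ) :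
    ∑ p ∈ Finset.HasAntidiagonal.antidiagonal n, q ^ (p.1 * (k + 1)) * qBinom q (p.2 + k) k =
      qBinom q (n + (k + 1)) (k + 1) := by
  induction n with
  | zero => simp [qBinom_self hq0 hq1]
  | succ n ih =>
    rw [Finset.Nat.sum_antidiagonal_succ, qBinom_pascal hq0 hq1, ← ih, Finset.mul_sum]
    simp only [zero_mul, pow_zero, one_mul]
    congr 1
    refine Finset.sum_congr rfl fun p _ => ?_
    rw [add_one_mul p.1, pow_add]
    ring

/-! ### Tuples of given sum -/

lemma sum_antidiagonalTuple_succ (k n : ℕ) (F : (Fin (k + 1) → ℕ) → ℝ) :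
    ∑ f ∈ antidiagonalTuple (k + 1) n, F f =
      ∑ p ∈ Finset.HasAntidiagonal.antidiagonal n, ∑ g ∈ antidiagonalTuple k p.2, F (Fin.cons p.1 g) := by
  rw [Finset.sum_sigma']
  symm
  refine Finset.sum_bij' (fun x _ => Fin.cons x.1.1 x.2)
    (fun f _ => ⟨(f 0, ∑ i, Fin.tail f i), Fin.tail f⟩) ?_ ?_ ?_ ?_ ?_
  · rintro ⟨⟨a, m⟩, g⟩ h
    simp only [Finset.mem_sigma, Finset.HasAntidiagonal.mem_antidiagonal, mem_antidiagonalTuple] at h ⊢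
    rw [Fin.sum_univ_succ]
    simp [h.1, h.2]
  · intro f h
    simp only [Finset.mem_sigma, Finset.HasAntidiagonal.mem_antidiagonal, mem_antidiagonalTuple] at h ⊢
    rw [Fin.sum_univ_succ] at h
    exact ⟨h, trivial⟩
  · rintro ⟨⟨a, m⟩, g⟩ h
    simp only [Finset.mem_sigma, Finset.HasAntidiagonal.mem_antidiagonal, mem_antidiagonalTuple] at h
    simp [h.2]
  · intro f _
    simp
  · intros
    rfl

/-- The `q`-binomial coefficient as the generating function of the tuples of sum `n` by the weight
`∑ f_i (k - i)`; the natural-number subtraction does not truncate, as `i ≤ k`. -/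
lemma sum_antidiagonalTuple_qpow {q : ℝ} (hq0 : 0 < q) (hq1 : q < 1) (k n : ℕ) :
    ∑ f ∈ antidiagonalTuple (k + 1) n, q ^ (∑ i : Fin (k + 1), f i * (k - (i : ℕ))) =
      qBinom q (n + k) k := by
  induction k generalizing n with
  | zero => simp [qBinom_zero_right hq0 hq1]
  | succ k ih =>
    rw [sum_antidiagonalTuple_succ, ← sum_antidiagonal_qBinom hq0 hq1]
    refine Finset.sum_congr rfl fun p _ => ?_
    rw [← ih, Finset.mul_sum]
    refine Finset.sum_congr rfl fun g _ => ?_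
    rw [Fin.sum_univ_succ, pow_add]
    simp

/-! ### The terms of the two series -/

lemma cpow_tuple {q : ℝ} (hq0 : 0 < q) (k : ℕ) (t : ℂ) (f : Fin (k + 1) → ℕ) :
    (q : ℂ) ^ (∑ i : Fin (k + 1), (f i : ℂ) * (t - (i : ℕ))) =
      ((q ^ (∑ i : Fin (k + 1), f i * (k - (i : ℕ))) : ℝ) : ℂ) *
        (q : ℂ) ^ (((∑ i, f i : ℕ) : ℂ) * (t - k)) := by
  have hq : (q : ℂ) ≠ 0 := by exact_mod_cast hq0.ne'
  rw [ofReal_pow, ← cpow_natCast, ← cpow_add _ _ hq]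
  congr 1
  push_cast
  rw [Finset.sum_mul, ← Finset.sum_add_distrib]
  refine Finset.sum_congr rfl fun i _ => ?_
  rw [Nat.cast_sub (by omega)]
  ring

lemma norm_q_cpow_lt_one {q : ℝ} (hq0 : 0 < q) (hq1 : q < 1) {w : ℂ} (hw : 0 < w.re) :
    ‖(q : ℂ) ^ w‖ < 1 := by
  rw [norm_cpow_eq_rpow_re_of_pos hq0]
  exact Real.rpow_lt_one hq0.le hq1 hw

lemma tendsto_qNum {q : ℝ} (hq0 : 0 < q) (hq1 : q < 1) (z : ℂ) :
    Tendsto (fun n : ℕ => qNum q ((n : ℂ) + z)) atTop (𝓝 (((1 - q)⁻¹ : ℝ) : ℂ)) := by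
  have hq : (q : ℂ) ≠ 0 := by exact_mod_cast hq0.ne'
  have h0 : Tendsto (fun n : ℕ => (q : ℂ) ^ n) atTop (𝓝 0) :=
    tendsto_pow_atTop_nhds_zero_of_norm_lt_one (by simpa [abs_of_pos hq0] using hq1)
  have h1 := ((h0.mul_const ((q : ℂ) ^ z)).const_sub 1).div_const (1 - (q : ℂ))
  simp only [zero_mul, sub_zero, one_div] at h1
  push_cast
  refine h1.congr fun n => ?_
  rw [qNum, cpow_add _ _ hq, cpow_natCast]

lemma summable_single {q : ℝ} (hq0 : 0 < q) (hq1 : q < 1) (k : ℕ) (s t z : ℂ)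
    (ht : (k : ℝ) < t.re) :
    Summable (fun n : ℕ =>
      ‖(qBinom q (n + k) k : ℂ) * (q : ℂ) ^ ((n : ℂ) * (t - k)) / (qNum q ((n : ℂ) + z)) ^ s‖) := by
  have hpos : 0 < (1 - q)⁻¹ := inv_pos.2 (by linarith)
  have hslit : (((1 - q)⁻¹ : ℝ) : ℂ) ∈ slitPlane := ofReal_mem_slitPlane.2 hpos
  have h1 : Tendsto (fun n : ℕ => ((qNum q ((n : ℂ) + z)) ^ s)⁻¹) atTop
      (𝓝 (((((1 - q)⁻¹ : ℝ) : ℂ) ^ s)⁻¹)) := by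
    refine ((tendsto_qNum hq0 hq1 z).cpow tendsto_const_nhds hslit).inv₀ ?_
    rw [Ne, cpow_eq_zero_iff]
    exact fun h => hpos.ne' (by exact_mod_cast h.1)
  have h2 : (fun n : ℕ => (qBinom q (n + k) k : ℂ)) =O[atTop] (fun _ => (1 : ℝ)) := by
    refine Asymptotics.IsBigO.of_bound (1 / qPoch q q k) (Eventually.of_forall fun n => ?_)
    rw [norm_real, Real.norm_of_nonneg (qBinom_nonneg hq0 hq1 _ _)]
    simpa using qBinom_le hq0 hq1 n k
  have hx : ‖(q : ℂ) ^ (t - k)‖ < 1 := norm_q_cpow_lt_one hq0 hq1 (by simpa using ht)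
  have h3 : (fun n : ℕ => (q : ℂ) ^ ((n : ℂ) * (t - k))) =O[atTop]
      (fun n : ℕ => ‖(q : ℂ) ^ (t - k)‖ ^ n) := by
    refine Asymptotics.IsBigO.of_bound 1 (Eventually.of_forall fun n => ?_)
    simp [cpow_nat_mul]
  refine summable_of_isBigO_nat (summable_geometric_of_lt_one (norm_nonneg _) hx)
    (Asymptotics.IsBigO.norm_left ?_)
  simpa [div_eq_mul_inv] using (h2.mul h3).mul (h1.isBigO_one ℝ)

/-- For `0 < q < 1`, `r ≥ 1`, `Re t > r − 1`, `Re z > 0`, the multiple series defining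
`ζ_{q,r}(s,t,z)` converges absolutely and can be rearranged as the absolutely convergent
single series `∑_{n≥0} [n+r−1; r−1]_q q^{n(t−r+1)} / [n+z]_q^s`. -/
theorem zetaQ_eq_single_series (q : ℝ) (hq0 : 0 < q) (hq1 : q < 1) (r : ℕ) (hr : 1 ≤ r)
    (s t z : ℂ) (ht : (r : ℝ) - 1 < t.re) (hz : 0 < z.re) :
    Summable (fun f : Fin r → ℕ =>
      ‖(q : ℂ) ^ (∑ i : Fin r, (f i : ℂ) * (t - (i : ℕ)))
        / (qNum q (((∑ i : Fin r, f i : ℕ) : ℂ) + z)) ^ s‖) ∧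
    Summable (fun n : ℕ =>
      ‖(qBinom q (n + r - 1) (r - 1) : ℂ) * (q : ℂ) ^ ((n : ℂ) * (t - r + 1))
        / (qNum q ((n : ℂ) + z)) ^ s‖) ∧
    zetaQ q r s t z
      = ∑' n : ℕ, (qBinom q (n + r - 1) (r - 1) : ℂ) * (q : ℂ) ^ ((n : ℂ) * (t - r + 1))
          / (qNum q ((n : ℂ) + z)) ^ s := by
  obtain ⟨k, rfl⟩ : ∃ k, r = k + 1 := ⟨r - 1, by omega⟩
  have hk : t - ((k + 1 : ℕ) : ℂ) + 1 = t - k := by push_cast; ring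
  simp only [hk, ← Nat.add_assoc, Nat.add_sub_cancel]
  have ht' : (k : ℝ) < t.re := by push_cast at ht; linarith
  have hS := summable_single hq0 hq1 k s t z ht'
  unfold zetaQ
  set T : (Fin (k + 1) → ℕ) → ℂ := fun f =>
    (q : ℂ) ^ (∑ i : Fin (k + 1), (f i : ℂ) * (t - (i : ℕ)))
        / (qNum q (((∑ i : Fin (k + 1), f i : ℕ) : ℂ) + z)) ^ s with hT
  -- the factor of a term that depends on the sum of the tuple only
  set c : ℕ → ℂ := fun n => (q : ℂ) ^ ((n : ℂ) * (t - k)) / (qNum q ((n : ℂ) + z)) ^ s with hc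
  have hTc (n : ℕ) (f : antidiagonalTuple (k + 1) n) :
      T f = ((q ^ (∑ i : Fin (k + 1), f.1 i * (k - (i : ℕ))) : ℝ) : ℂ) * c n := by
    have hf := mem_antidiagonalTuple.1 f.2
    simp only [hT, hc]
    rw [cpow_tuple hq0, hf, mul_div_assoc]
  have hsum (n : ℕ) : ∑' f : antidiagonalTuple (k + 1) n, T f
      = (qBinom q (n + k) k : ℂ) * (q : ℂ) ^ ((n : ℂ) * (t - k)) / (qNum q ((n : ℂ) + z)) ^ s := by
    simp only [hTc]
    rw [tsum_mul_right, mul_div_assoc, ← sum_antidiagonalTuple_qpow hq0 hq1, tsum_fintype,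
      Finset.sum_coe_sort (antidiagonalTuple (k + 1) n)
        (fun f => ((q ^ (∑ i : Fin (k + 1), f i * (k - (i : ℕ))) : ℝ) : ℂ)), ofReal_sum]
  have hnsum (n : ℕ) : ∑' f : antidiagonalTuple (k + 1) n, ‖T f‖
      = ‖(qBinom q (n + k) k : ℂ) * (q : ℂ) ^ ((n : ℂ) * (t - k))
          / (qNum q ((n : ℂ) + z)) ^ s‖ := by
    have hp (m : ℕ) : ‖((q ^ m : ℝ) : ℂ)‖ = q ^ m := by
      rw [norm_real, Real.norm_of_nonneg (by positivity)]
    simp only [hTc, norm_mul, hp]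
    rw [mul_div_assoc, norm_mul, norm_real, Real.norm_of_nonneg (qBinom_nonneg hq0 hq1 _ _),
      tsum_mul_right, ← sum_antidiagonalTuple_qpow hq0 hq1, tsum_fintype,
      Finset.sum_coe_sort (antidiagonalTuple (k + 1) n)
        (fun f => q ^ (∑ i : Fin (k + 1), f i * (k - (i : ℕ))))]
  have hsig : Summable (fun x : Σ n, antidiagonalTuple (k + 1) n => ‖T x.2‖) := by
    rw [summable_sigma_of_nonneg fun _ => norm_nonneg _]
    refine ⟨fun n => (hasSum_fintype _).summable, ?_⟩
    simpa only [hnsum] using hS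
  refine ⟨?_, hS, ?_⟩
  · exact (sigmaAntidiagonalTupleEquivTuple (k + 1)).summable_iff.1 hsig
  · refine ((sigmaAntidiagonalTupleEquivTuple (k + 1)).tsum_eq T).symm.trans ?_
    exact hsig.of_norm.tsum_sigma.trans (tsum_congr hsum)
end

section
/- Let q be real with 0 < q < 1, let r ≥ 1 be an integer, let s, t ∈ ℂ with Re(t) > r − 1, and let z ∈ ℂ with Re(z) > 0. Then the ladder relation ζ_{q,r}(s,t,z) = q^{t−r+1} · ζ_{q,r}(s,t,z+1) + ζ_{q,r−1}(s,t,z) holds, where ζ_{q,0}(s,t,z) := [z]_q^{−s}. -/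
/-!
Write `r = k + 1` and split the sum over `(n₁, …, n_{k+1})` according to the last index. The terms
with `n_{k+1} = 0` are exactly those of `ζ_{q,k}(s,t,z)`. Replacing `n_{k+1}` by `n_{k+1} + 1` in
the remaining ones multiplies the numerator by `q^{t-k}` and shifts `z` to `z + 1`, which gives
`q^{t-k} ζ_{q,k+1}(s,t,z+1)`.

The rearrangement needs absolute convergence (`summable_zetaQ_term`). The numerators have norm
`∏ i, (q^{Re t - i})^{n_i}`, a product of convergent geometric series since `Re t > k`
(`summable_prod_pow`). The factors `1/[N+z]_q^s` are bounded in `N` because `[N+z]_q → 1/(1-q)`, a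
positive real at which the principal power is continuous and nonzero (`bounded_inv_qNum_cpow`).
-/

open Complex

/-- The summand of `zetaQ` at the tuple `f`. -/
noncomputable def zetaQTerm (q : ℝ) (r : ℕ) (s t z : ℂ) (f : Fin r → ℕ) : ℂ :=
  (q : ℂ) ^ (∑ i : Fin r, (f i : ℂ) * (t - (i : ℕ)))
    / (qNum q (((∑ i : Fin r, f i : ℕ) : ℂ) + z)) ^ s

lemma summable_prod_pow (r : ℕ) (a : Fin r → ℝ) (h0 : ∀ i, 0 ≤ a i) (h1 : ∀ i, a i < 1) :
    Summable fun f : Fin r → ℕ => ∏ i, a i ^ f i := by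
  induction r with
  | zero => exact Summable.of_finite
  | succ k ih =>
    rw [← (Fin.consEquiv (fun _ : Fin (k + 1) => ℕ)).summable_iff]
    have h := (summable_geometric_of_lt_one (h0 0) (h1 0)).mul_of_nonneg
      (ih (fun i => a i.succ) (fun i => h0 _) (fun i => h1 _))
      (fun n => pow_nonneg (h0 0) n)
      (fun f => Finset.prod_nonneg fun i _ => pow_nonneg (h0 _) _)
    refine h.congr fun p => ?_
    simp [Fin.consEquiv, Fin.prod_univ_succ]

lemma bounded_inv_qNum_cpow (q : ℝ) (hq0 : 0 < q) (hq1 : q < 1) (s z : ℂ) :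
    ∃ C : ℝ, ∀ N : ℕ, ‖((qNum q ((N : ℂ) + z)) ^ s)⁻¹‖ ≤ C := by
  have hqC : (q : ℂ) ≠ 0 := by exact_mod_cast hq0.ne'
  have hpow : Filter.Tendsto (fun N : ℕ => (q : ℂ) ^ ((N : ℂ) + z)) Filter.atTop (nhds 0) := by
    have h : Filter.Tendsto (fun N : ℕ => (q : ℂ) ^ N * (q : ℂ) ^ z) Filter.atTop
        (nhds (0 * (q : ℂ) ^ z)) := by
      refine (tendsto_pow_atTop_nhds_zero_of_norm_lt_one ?_).mul_const _
      simpa [abs_of_pos hq0] using hq1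
    rw [zero_mul] at h
    refine h.congr fun N => ?_
    rw [cpow_add _ _ hqC, cpow_natCast]
  have hnum : Filter.Tendsto (fun N : ℕ => qNum q ((N : ℂ) + z)) Filter.atTop
      (nhds (((1 - q)⁻¹ : ℝ) : ℂ)) := by
    have h := (hpow.const_sub 1).div_const (1 - (q : ℂ))
    simpa [qNum] using h
  have hpos : 0 < (1 - q)⁻¹ := inv_pos.2 (sub_pos.2 hq1)
  have hne : (((1 - q)⁻¹ : ℝ) : ℂ) ≠ 0 := by exact_mod_cast hpos.ne'
  have hlim := (((continuousAt_cpow_const (b := s)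
    (ofReal_mem_slitPlane.2 hpos)).tendsto.comp hnum).inv₀ (fun h => hne ((cpow_eq_zero_iff _ _).1 h).1))
  obtain ⟨C, hC⟩ := (Metric.isBounded_range_of_tendsto _ hlim).exists_norm_le
  exact ⟨C, fun N => hC _ ⟨N, rfl⟩⟩

lemma summable_zetaQ_term (q : ℝ) (hq0 : 0 < q) (hq1 : q < 1) (r : ℕ)
    (s t z : ℂ) (ht : (r : ℝ) - 1 < t.re) : Summable (zetaQTerm q r s t z) := by
  obtain ⟨C, hC⟩ := bounded_inv_qNum_cpow q hq0 hq1 s z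
  have hlt : ∀ i : Fin r, q ^ (t.re - (i : ℕ)) < 1 := fun i => by
    refine Real.rpow_lt_one hq0.le hq1 ?_
    have h : ((i : ℕ) : ℝ) + 1 ≤ r := by exact_mod_cast i.isLt
    linarith
  refine Summable.of_norm_bounded ((summable_prod_pow r (fun i => q ^ (t.re - (i : ℕ)))
    (fun i => Real.rpow_nonneg hq0.le _) hlt).mul_right C) fun f => ?_
  have hnorm : ‖(q : ℂ) ^ (∑ i : Fin r, (f i : ℂ) * (t - (i : ℕ)))‖
      = ∏ i : Fin r, (q ^ (t.re - (i : ℕ))) ^ f i := by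
    rw [norm_cpow_eq_rpow_re_of_pos hq0, re_sum, Real.rpow_sum_of_pos hq0]
    refine Finset.prod_congr rfl fun i _ => ?_
    rw [← Real.rpow_mul_natCast hq0.le]
    congr 1
    simp [mul_comm]
  rw [zetaQTerm, div_eq_mul_inv, norm_mul, hnorm]
  exact mul_le_mul_of_nonneg_left (hC _)
    (Finset.prod_nonneg fun i _ => pow_nonneg (Real.rpow_nonneg hq0.le _) _)

lemma zetaQTerm_snoc_zero (q : ℝ) (k : ℕ) (s t z : ℂ) (g : Fin k → ℕ) :
    zetaQTerm q (k + 1) s t z (Fin.snoc g 0) = zetaQTerm q k s t z g := by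
  simp [zetaQTerm, Fin.sum_univ_castSucc]

lemma zetaQTerm_snoc_succ (q : ℝ) (hq0 : 0 < q) (k : ℕ) (s t z : ℂ) (g : Fin k → ℕ) (n : ℕ) :
    zetaQTerm q (k + 1) s t z (Fin.snoc g (n + 1))
      = (q : ℂ) ^ (t - k) * zetaQTerm q (k + 1) s t (z + 1) (Fin.snoc g n) := by
  have hqC : (q : ℂ) ≠ 0 := by exact_mod_cast hq0.ne'
  simp only [zetaQTerm, Fin.sum_univ_castSucc, Fin.snoc_castSucc, Fin.snoc_last]
  rw [← mul_div_assoc, ← cpow_add _ _ hqC]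
  congr 2
  · simp
    ring
  · congr 1
    push_cast
    ring

/-- `zetaQ` in rank `k + 1` as an iterated sum, the last index being the outer one. -/
lemma zetaQ_succ_eq (q : ℝ) (hq0 : 0 < q) (hq1 : q < 1) (k : ℕ)
    (s t z : ℂ) (ht : (k : ℝ) < t.re) :
    Summable (fun p : ℕ × (Fin k → ℕ) => zetaQTerm q (k + 1) s t z (Fin.snoc p.2 p.1)) ∧
    zetaQ q (k + 1) s t z
      = ∑' n : ℕ, ∑' g : Fin k → ℕ, zetaQTerm q (k + 1) s t z (Fin.snoc g n) := by
  have hs := summable_zetaQ_term q hq0 hq1 (k + 1) s t z (by push_cast; linarith)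
  have hs' := (Fin.snocEquiv (fun _ : Fin (k + 1) => ℕ)).summable_iff.2 hs
  refine ⟨hs', ?_⟩
  exact ((Fin.snocEquiv (fun _ : Fin (k + 1) => ℕ)).tsum_eq _).symm.trans hs'.tsum_prod

/-- The ladder relation
`ζ_{q,r}(s,t,z) = q^{t−r+1} ζ_{q,r}(s,t,z+1) + ζ_{q,r−1}(s,t,z)`
for `0 < q < 1`, `r ≥ 1`, `Re t > r − 1` and `Re z > 0`. -/
theorem zetaQ_ladder (q : ℝ) (hq0 : 0 < q) (hq1 : q < 1) (r : ℕ) (hr : 1 ≤ r)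
    (s t z : ℂ) (ht : (r : ℝ) - 1 < t.re) (hz : 0 < z.re) :
    zetaQ q r s t z
      = (q : ℂ) ^ (t - (r : ℂ) + 1) * zetaQ q r s t (z + 1) + zetaQ q (r - 1) s t z := by
  obtain ⟨k, rfl⟩ : ∃ k, r = k + 1 := ⟨r - 1, by omega⟩
  have htk : (k : ℝ) < t.re := by
    push_cast at ht
    linarith
  obtain ⟨hs, h⟩ := zetaQ_succ_eq q hq0 hq1 k s t z htk
  obtain ⟨-, h'⟩ := zetaQ_succ_eq q hq0 hq1 k s t (z + 1) htk
  have hexp : t - ((k + 1 : ℕ) : ℂ) + 1 = t - k := by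
    push_cast
    ring
  rw [h, h', hs.prod.tsum_eq_zero_add, hexp, add_comm]
  simp only [zetaQTerm_snoc_zero, zetaQTerm_snoc_succ q hq0, tsum_mul_left]
  rfl
end

section
/- Let q be real with 0 < q < 1, let r ≥ 1 be an integer, and let z ∈ ℂ. Then for every integer n ≥ 0 one has the expansion [n+r−1; r−1]_q = ∑_{l=0}^{r−1} q^{n(r−1−l)} · P^l_{q,r}(z) · [n+z]_q^l. -/
/-!
The numbers `[w]_q` satisfy `[n + m]_q = [n + z]_q - q^n * (q^m * [z - m]_q)` for every `z`. The
`q`-binomial coefficient is the product of the `[n + m]_q` over `1 ≤ m ≤ r - 1`, divided by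
`[r - 1]_q!` (`qBinom_mul_qFact`). Substituting the identity into each factor and expanding the
product of differences over subsets `A` of `{1, …, r - 1}`, the subsets with `r - 1 - l` elements
contribute the term in `[n + z]_q ^ l` (`prod_qNum_expansion`).
-/

open Complex

/-- The q-factorial `[n]_q! = ∏_{k=1}^n [k]_q`. -/
noncomputable def qFact (q : ℝ) (n : ℕ) : ℝ := ∏ k ∈ Finset.Icc 1 n, (1 - q ^ k) / (1 - q)

/-- The coefficient `P^l_{q,r}(z)`: for `0 ≤ l ≤ r−1`,
`P^l_{q,r}(z) = ((−1)^{r−1−l}/[r−1]_q!) ∑_{1 ≤ m₁ < ⋯ < m_{r−1−l} ≤ r−1}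
q^{m₁+⋯+m_{r−1−l}} [z−m₁]_q ⋯ [z−m_{r−1−l}]_q`
(so that `P^{r−1}_{q,r}(z) = 1/[r−1]_q!`, the sum over the empty set being `1`). -/
noncomputable def Pq (q : ℝ) (r l : ℕ) (z : ℂ) : ℂ :=
  ((-1 : ℂ) ^ (r - 1 - l) / (qFact q (r - 1) : ℂ)) *
    ∑ A ∈ Finset.powersetCard (r - 1 - l) (Finset.Icc 1 (r - 1)),
      (q : ℂ) ^ (∑ m ∈ A, m) * ∏ m ∈ A, qNum q (z - (m : ℕ))

lemma qNum_natCast (q : ℝ) (k : ℕ) : qNum q (k : ℂ) = (((1 - q ^ k) / (1 - q) : ℝ) : ℂ) := by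
  simp [qNum]

lemma qNum_add_natCast (q : ℝ) (hq0 : 0 < q) (z : ℂ) (n m : ℕ) :
    qNum q ((n + m : ℕ) : ℂ)
      = qNum q ((n : ℂ) + z) - (q : ℂ) ^ n * ((q : ℂ) ^ m * qNum q (z - (m : ℕ))) := by
  have hq : (q : ℂ) ≠ 0 := by exact_mod_cast hq0.ne'
  rw [qNum_natCast]
  simp only [qNum]
  rw [cpow_add _ _ hq, cpow_sub _ _ hq, cpow_natCast, cpow_natCast]
  have hm : (q : ℂ) ^ m ≠ 0 := pow_ne_zero _ hq
  push_cast
  rw [← mul_div_assoc, ← mul_div_assoc, ← sub_div]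
  congr 1
  field_simp
  ring

lemma qPoch_self_ne_zero (q : ℝ) (hq0 : 0 < q) (hq1 : q < 1) (m : ℕ) : qPoch q q m ≠ 0 := by
  refine Finset.prod_ne_zero_iff.2 fun j _ => ?_
  rw [← pow_succ']
  exact (sub_pos.2 (pow_lt_one₀ hq0.le hq1 (Nat.succ_ne_zero j))).ne'

lemma qFact_eq (q : ℝ) (s : ℕ) : qFact q s = qPoch q q s / (1 - q) ^ s := by
  rw [qFact, qPoch, Finset.prod_div_distrib, Finset.prod_const, Nat.card_Icc, Nat.add_sub_cancel,
    ← Finset.Ico_add_one_right_eq_Icc, Finset.prod_Ico_eq_prod_range, Nat.add_sub_cancel]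
  congr 1
  exact Finset.prod_congr rfl fun j _ => by rw [pow_add, pow_one]

lemma qBinom_mul_qFact (q : ℝ) (hq0 : 0 < q) (hq1 : q < 1) (n s : ℕ) :
    qBinom q (n + s) s * qFact q s = ∏ m ∈ Finset.Icc 1 s, (1 - q ^ (n + m)) / (1 - q) := by
  have hn := qPoch_self_ne_zero q hq0 hq1 n
  have hs := qPoch_self_ne_zero q hq0 hq1 s
  have h1 : (1 - q) ^ s ≠ 0 := pow_ne_zero _ (sub_pos.2 hq1).ne'
  have hsplit : qPoch q q (n + s) = qPoch q q n * ∏ m ∈ Finset.Icc 1 s, (1 - q ^ (n + m)) := by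
    rw [qPoch, qPoch, Finset.prod_range_add, ← Finset.Ico_add_one_right_eq_Icc,
      Finset.prod_Ico_eq_prod_range, Nat.add_sub_cancel]
    congr 1
    exact Finset.prod_congr rfl fun j _ => by ring
  rw [Finset.prod_div_distrib, Finset.prod_const, Nat.card_Icc, Nat.add_sub_cancel, qFact_eq,
    qBinom, Nat.add_sub_cancel, hsplit]
  field_simp

/-- Expansion of `∏ (X - a * (b ^ m * c m))` in powers of `X`, grouping the subsets that select the
second term of a factor by cardinality `s - l`. -/
lemma prod_qNum_expansion (X a b : ℂ) (c : ℕ → ℂ) (s : ℕ) :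
    ∏ m ∈ Finset.Icc 1 s, (X - a * (b ^ m * c m))
      = ∑ l ∈ Finset.range (s + 1), a ^ (s - l) * ((-1) ^ (s - l) *
          ∑ A ∈ Finset.powersetCard (s - l) (Finset.Icc 1 s),
            b ^ (∑ m ∈ A, m) * ∏ m ∈ A, c m) * X ^ l := by
  rw [Finset.prod_sub, Finset.sum_powerset, Nat.card_Icc, Nat.add_sub_cancel,
    ← Finset.sum_range_reflect]
  refine Finset.sum_congr rfl fun l hl => ?_
  have hls : l ≤ s := Nat.lt_succ_iff.1 (Finset.mem_range.1 hl)
  rw [Nat.add_sub_cancel, Finset.mul_sum, Finset.mul_sum, Finset.sum_mul]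
  refine Finset.sum_congr rfl fun A hA => ?_
  obtain ⟨hsub, hcard⟩ := Finset.mem_powersetCard.1 hA
  have hcompl : s - (s - l) = l := by omega
  rw [Finset.prod_const, Finset.card_sdiff_of_subset hsub, Nat.card_Icc, hcard,
    Nat.add_sub_cancel, hcompl, Finset.prod_mul_distrib, Finset.prod_mul_distrib,
    Finset.prod_const, hcard, Finset.prod_pow_eq_pow_sum]
  ring

/-- For `0 < q < 1`, `r ≥ 1`, `z ∈ ℂ` and every `n ≥ 0`:
`[n+r−1; r−1]_q = ∑_{l=0}^{r−1} q^{n(r−1−l)} P^l_{q,r}(z) [n+z]_q^l`. -/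
theorem qBinom_expansion (q : ℝ) (hq0 : 0 < q) (hq1 : q < 1) (r : ℕ) (hr : 1 ≤ r)
    (z : ℂ) (n : ℕ) :
    (qBinom q (n + r - 1) (r - 1) : ℂ)
      = ∑ l ∈ Finset.range r,
          (q : ℂ) ^ (n * (r - 1 - l)) * Pq q r l z * (qNum q ((n : ℂ) + z)) ^ l := by
  obtain ⟨s, rfl⟩ : ∃ s, r = s + 1 := ⟨r - 1, by omega⟩
  rw [← Nat.add_assoc, Nat.add_sub_cancel, Nat.add_sub_cancel]
  have hF : (qFact q s : ℂ) ≠ 0 := by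
    rw [qFact_eq]
    exact_mod_cast div_ne_zero (qPoch_self_ne_zero q hq0 hq1 s)
      (pow_ne_zero _ (sub_pos.2 hq1).ne')
  have hprod : (qBinom q (n + s) s : ℂ) * (qFact q s : ℂ)
      = ∏ m ∈ Finset.Icc 1 s, (qNum q ((n : ℂ) + z)
          - (q : ℂ) ^ n * ((q : ℂ) ^ m * qNum q (z - (m : ℕ)))) := by
    rw [← ofReal_mul, qBinom_mul_qFact q hq0 hq1, ofReal_prod]
    exact Finset.prod_congr rfl fun m _ => by
      rw [← qNum_add_natCast q hq0, qNum_natCast]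
  rw [prod_qNum_expansion (c := fun m => qNum q (z - (m : ℕ)))] at hprod
  rw [eq_div_of_mul_eq hF hprod, Finset.sum_div]
  refine Finset.sum_congr rfl fun l _ => ?_
  rw [Pq, Nat.add_sub_cancel, pow_mul]
  ring
end

section
/- Let r ≥ 1 be an integer, let s ∈ ℂ with Re(s) > r, and let z ∈ ℂ with Re(z) > 0. Then ζ_r(s,z) = ∑_{l=0}^{r−1} P^l_r(z) · ∑_{n=0}^{∞} (n+z)^{l−s}, where each inner series converges absolutely because Re(s−l) > 1. -/
/-!
The number of tuples `f : Fin r → ℕ` with sum `n` is `(n + r - 1).choose (r - 1)`, which equals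
`(1 / (r - 1)!) ∏_{j=1}^{r-1} (n + j)`. This product is the polynomial defining `Pclassical`,
evaluated at `n + z`, so the fibre count times `(n + z) ^ (-s)` is `∑ l, P^l_r(z) (n + z) ^ (l - s)`
(`card_mul_cpow_eq_sum`). Each of the finitely many series in `n` converges absolutely by comparison
with `∑ n ^ (-(Re s - l))` (`summable_norm_add_cpow`); hence so does the sum over all tuples, which
may then be evaluated fibre by fibre along `f ↦ ∑ i, f i`.
-/

open Complex

/-- The Barnes multiple zeta function `ζ_r(s,z) = ∑_{n₁,…,n_r ≥ 0} (n₁+⋯+n_r+z)^{−s}`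
(principal complex powers). -/
noncomputable def zetaBarnes (r : ℕ) (s z : ℂ) : ℂ :=
  ∑' f : Fin r → ℕ, (((∑ i : Fin r, f i : ℕ) : ℂ) + z) ^ (-s)

/-- The polynomial coefficient `P^l_r(z)`: `(1/(r−1)!)` times the coefficient of `X^l`
in `∏_{j=1}^{r−1} (X − z + j) ∈ ℂ[X]`. -/
noncomputable def Pclassical (r l : ℕ) (z : ℂ) : ℂ :=
  (∏ j ∈ Finset.Icc 1 (r - 1),
      (Polynomial.X - Polynomial.C z + Polynomial.C ((j : ℕ) : ℂ))).coeff l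
    / ((r - 1).factorial : ℂ)

/-- Stars and bars. -/
lemma card_antidiagonalTuple_succ (m n : ℕ) :
    (Finset.Nat.antidiagonalTuple (m + 1) n).card = (n + m).choose m := by
  have h := Finset.card_finsuppAntidiag_nat_eq_choose (s := (Finset.univ : Finset (Fin (m + 1)))) n
  have card_eq : (Finset.finsuppAntidiag (Finset.univ : Finset (Fin (m + 1))) n).card
      = (Finset.piAntidiag (Finset.univ : Finset (Fin (m + 1))) n).card := by
    rw [Finset.finsuppAntidiag, Finset.card_map, Finset.card_attach]
  rw [← Finset.piAntidiag_univ_fin_eq_antidiagonalTuple, ← card_eq, h,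
    Finset.card_univ, Fintype.card_fin,
    show m + 1 + n - 1 = n + m by omega, Nat.choose_symm_add]

lemma summable_norm_add_cpow {z a : ℂ} (hz : 0 < z.re) (ha : a.re < -1) :
    Summable (fun n : ℕ => ‖((n : ℂ) + z) ^ a‖) := by
  have hsum : Summable (fun n : ℕ => (n : ℝ) ^ a.re * Real.exp (Real.pi * |a.im|)) :=
    (Real.summable_nat_rpow.2 ha).mul_right _
  refine Summable.of_norm_bounded_eventually_nat hsum ?_
  filter_upwards [Filter.eventually_gt_atTop 0] with n hn
  have hn' : (0 : ℝ) < n := Nat.cast_pos.2 hn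
  have hle : (n : ℝ) ≤ ‖(n : ℂ) + z‖ := by
    refine le_trans ?_ (Complex.re_le_norm _)
    simp [hz.le]
  rw [norm_norm]
  refine (Complex.norm_cpow_le _ _).trans ?_
  rw [div_eq_mul_inv, ← Real.exp_neg]
  refine mul_le_mul (Real.rpow_le_rpow_of_nonpos hn' hle (by linarith))
    (Real.exp_le_exp.2 ?_) (Real.exp_pos _).le (by positivity)
  calc -(Complex.arg ((n : ℂ) + z) * a.im) ≤ |Complex.arg ((n : ℂ) + z) * a.im| := neg_le_abs _
    _ = |Complex.arg ((n : ℂ) + z)| * |a.im| := abs_mul _ _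
    _ ≤ Real.pi * |a.im| := by gcongr; exact Complex.abs_arg_le_pi _

/-- The binomial coefficient is the polynomial with coefficients `Pclassical`, at `n + z`. -/
lemma choose_eq_sum_Pclassical (m n : ℕ) (z : ℂ) :
    ((n + m).choose m : ℂ)
      = ∑ l ∈ Finset.range (m + 1), Pclassical (m + 1) l z * ((n : ℂ) + z) ^ l := by
  set p : Polynomial ℂ := ∏ j ∈ Finset.Icc 1 m,
    (Polynomial.X - Polynomial.C z + Polynomial.C ((j : ℕ) : ℂ)) with hp
  have hdeg : p.natDegree < m + 1 := by
    refine Nat.lt_succ_of_le ((Polynomial.natDegree_prod_le _ _).trans ?_)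
    refine (Finset.sum_le_card_nsmul _ _ 1 fun j _ => ?_).trans (by simp)
    compute_degree
  have heval : p.eval ((n : ℂ) + z) = (m.factorial : ℂ) * ((n + m).choose m : ℂ) := by
    rw [← Nat.cast_mul, ← Nat.ascFactorial_eq_factorial_mul_choose, Nat.ascFactorial_eq_prod_range,
      hp, Polynomial.eval_prod, Finset.range_eq_Ico, Nat.cast_prod,
      ← Finset.Ico_add_one_right_eq_Icc, Finset.prod_Ico_eq_prod_range, Finset.range_eq_Ico]
    refine Finset.prod_congr (by simp) fun j _ => ?_
    simp
    ring
  have hfac : (m.factorial : ℂ) ≠ 0 := Nat.cast_ne_zero.2 m.factorial_ne_zero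
  rw [Polynomial.eval_eq_sum_range' hdeg] at heval
  rw [eq_comm, ← mul_right_inj' hfac, ← heval, Finset.mul_sum]
  refine Finset.sum_congr rfl fun l _ => ?_
  simp only [Pclassical, Nat.add_sub_cancel, ← hp]
  field_simp

lemma card_mul_cpow_eq_sum (m n : ℕ) (s : ℂ) {z : ℂ} (hz : 0 < z.re) :
    ((Finset.Nat.antidiagonalTuple (m + 1) n).card : ℂ) * ((n : ℂ) + z) ^ (-s)
      = ∑ l ∈ Finset.range (m + 1),
          Pclassical (m + 1) l z * ((n : ℂ) + z) ^ ((l : ℂ) - s) := by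
  have hne : (n : ℂ) + z ≠ 0 := fun h => by
    have h' := congrArg Complex.re h
    simp at h'
    have : (0 : ℝ) ≤ n := n.cast_nonneg
    linarith
  rw [card_antidiagonalTuple_succ, choose_eq_sum_Pclassical m n z, Finset.sum_mul]
  refine Finset.sum_congr rfl fun l _ => ?_
  rw [sub_eq_add_neg, Complex.cpow_add _ _ hne, Complex.cpow_natCast, mul_assoc]

/-- Summation over tuples, grouped by the value of their sum. -/
lemma tsum_tuple_eq (r : ℕ) (g : ℕ → ℂ)
    (hg : Summable fun n => ‖((Finset.Nat.antidiagonalTuple r n).card : ℂ) * g n‖) :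
    ∑' f : Fin r → ℕ, g (∑ i, f i)
      = ∑' n, ((Finset.Nat.antidiagonalTuple r n).card : ℂ) * g n := by
  let e := Finset.Nat.sigmaAntidiagonalTupleEquivTuple r
  have he : ∀ x, g (∑ i, e x i) = g x.1 := fun x =>
    congrArg g (Finset.Nat.mem_antidiagonalTuple.1 x.2.2)
  have hsum : Summable fun x : (Σ n, Finset.Nat.antidiagonalTuple r n) => g x.1 := by
    refine Summable.of_norm ((summable_sigma_of_nonneg fun _ => norm_nonneg _).2
      ⟨fun n => Summable.of_finite, ?_⟩)
    refine hg.congr fun n => ?_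
    simp [tsum_fintype]
  rw [← e.tsum_eq]
  simp only [he]
  rw [hsum.tsum_sigma]
  refine tsum_congr fun n => ?_
  simp [tsum_fintype]

/-- For `r ≥ 1`, `Re s > r`, `Re z > 0`:
`ζ_r(s,z) = ∑_{l=0}^{r−1} P^l_r(z) ∑_{n≥0} (n+z)^{l−s}`, each inner series being
absolutely convergent (since `Re(s−l) > 1`). -/
theorem zetaBarnes_eq_sum_Pclassical (r : ℕ) (hr : 1 ≤ r) (s z : ℂ)
    (hs : (r : ℝ) < s.re) (hz : 0 < z.re) :
    (∀ l < r, Summable (fun n : ℕ => ‖((n : ℂ) + z) ^ ((l : ℂ) - s)‖)) ∧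
    zetaBarnes r s z
      = ∑ l ∈ Finset.range r, Pclassical r l z * ∑' n : ℕ, ((n : ℂ) + z) ^ ((l : ℂ) - s) := by
  have habs : ∀ l < r, Summable (fun n : ℕ => ‖((n : ℂ) + z) ^ ((l : ℂ) - s)‖) := by
    intro l hl
    refine summable_norm_add_cpow hz ?_
    have : (l : ℝ) + 1 ≤ r := by exact_mod_cast hl
    simp only [Complex.sub_re, Complex.natCast_re]
    linarith
  refine ⟨habs, ?_⟩
  obtain ⟨m, rfl⟩ : ∃ m, r = m + 1 := ⟨r - 1, by omega⟩
  have hterm : ∀ l ∈ Finset.range (m + 1), Summable fun n : ℕ =>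
      ‖Pclassical (m + 1) l z * ((n : ℂ) + z) ^ ((l : ℂ) - s)‖ := fun l hl => by
    simpa only [norm_mul] using (habs l (Finset.mem_range.1 hl)).mul_left _
  have hcard : Summable fun n : ℕ =>
      ‖((Finset.Nat.antidiagonalTuple (m + 1) n).card : ℂ) * ((n : ℂ) + z) ^ (-s)‖ := by
    simp only [card_mul_cpow_eq_sum m _ s hz]
    exact Summable.of_nonneg_of_le (fun _ => norm_nonneg _) (fun _ => norm_sum_le _ _)
      (summable_sum hterm)
  rw [zetaBarnes, tsum_tuple_eq (m + 1) (fun n => ((n : ℂ) + z) ^ (-s)) hcard]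
  simp only [card_mul_cpow_eq_sum m _ s hz]
  rw [Summable.tsum_finsetSum fun l hl => (hterm l hl).of_norm]
  exact Finset.sum_congr rfl fun l _ => tsum_mul_left
end

section
/- Let r ≥ 1 be an integer, let z ∈ ℂ, and let 0 ≤ l ≤ r − 1. Then lim_{q → 1⁻} P^l_{q,r}(z) = P^l_r(z), the limit being taken over real q increasing to 1. -/
/-!
As `q → 1⁻` the `q`-number `[w]_q` is the difference quotient of `q ↦ q ^ w` at `1`, so it tends
to `w` (`tendsto_qNum`). Hence `[n]_q!` tends to `n!` (`tendsto_qFact`), and the finite sum defining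
`P^l_{q,r}(z)` tends termwise to the corresponding elementary symmetric sum in the `z - m`. By
Vieta's formula (`Pclassical_eq`) that limit is `P^l_r(z)`.
-/

open Complex

open Filter Topology in
/-- `[w]_q → w`: the difference quotient of `q ↦ q ^ w` at `1` tends to its derivative `w`. -/
lemma tendsto_qNum_s7 (w : ℂ) :
    Tendsto (fun q : ℝ => qNum q w) (𝓝[Set.Ioo 0 1] 1) (𝓝 w) := by
  have hd : HasDerivAt (fun x : ℂ => x ^ w) w 1 := by
    simpa using (hasDerivAt_id (1 : ℂ)).cpow_const (c := w) (by simp)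
  have hs := hasDerivAt_iff_tendsto_slope.mp hd
  have hq : Tendsto (fun q : ℝ => (q : ℂ)) (𝓝[Set.Ioo 0 1] 1) (𝓝[≠] 1) := by
    refine tendsto_nhdsWithin_iff.mpr ⟨?_, ?_⟩
    · exact (Complex.continuous_ofReal.tendsto' 1 1 (by simp)).mono_left nhdsWithin_le_nhds
    · filter_upwards [self_mem_nhdsWithin] with q hq
      simpa using hq.2.ne
  refine (hs.comp hq).congr fun q => ?_
  simp only [Function.comp_apply, slope_def_field, qNum, Complex.one_cpow]
  rw [← neg_div_neg_eq, neg_sub, neg_sub]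

open Filter Topology in
lemma tendsto_qFact (n : ℕ) :
    Tendsto (fun q : ℝ => (qFact q n : ℂ)) (𝓝[Set.Ioo 0 1] 1) (𝓝 (n.factorial : ℂ)) := by
  have h : Tendsto (fun q : ℝ => ∏ k ∈ Finset.Icc 1 n, qNum q (k : ℂ)) (𝓝[Set.Ioo 0 1] 1)
      (𝓝 (∏ k ∈ Finset.Icc 1 n, (k : ℂ))) :=
    tendsto_finsetProd _ fun k _ => tendsto_qNum_s7 k
  have hfact : ∏ k ∈ Finset.Icc 1 n, k = n.factorial := by
    rw [← Finset.Ico_add_one_right_eq_Icc, Finset.prod_Ico_id_eq_factorial]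
  rw [← Nat.cast_prod, hfact] at h
  refine h.congr fun q => ?_
  simp [qFact, qNum]

/-- Vieta's formula for `∏ (X - z + j)`, with the signs collected in front. -/
lemma Pclassical_eq (r l : ℕ) (z : ℂ) (hl : l ≤ r - 1) :
    Pclassical r l z = ((-1 : ℂ) ^ (r - 1 - l) / ((r - 1).factorial : ℂ)) *
      ∑ A ∈ Finset.powersetCard (r - 1 - l) (Finset.Icc 1 (r - 1)),
        ∏ m ∈ A, (z - (m : ℕ)) := by
  have hfac : ∀ j : ℕ, (Polynomial.X - Polynomial.C z + Polynomial.C (j : ℂ)) =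
      Polynomial.X + Polynomial.C (-(z - (j : ℂ))) := by
    intro j
    simp only [Polynomial.C_neg, Polynomial.C_sub]
    ring
  have hcoeff := Finset.prod_X_add_C_coeff (Finset.Icc 1 (r - 1))
    (fun j : ℕ => -(z - (j : ℂ))) (k := l) (by simpa using hl)
  simp only [Nat.card_Icc, Nat.add_sub_cancel] at hcoeff
  unfold Pclassical
  simp_rw [hfac]
  rw [hcoeff, div_mul_eq_mul_div, Finset.mul_sum]
  congr 1
  refine Finset.sum_congr rfl fun A hA => ?_
  rw [Finset.prod_neg, (Finset.mem_powersetCard.mp hA).2]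

/-- For `r ≥ 1`, `z ∈ ℂ`, `0 ≤ l ≤ r − 1`: `lim_{q↑1} P^l_{q,r}(z) = P^l_r(z)`,
the limit being over real `q` increasing to `1` (within `(0,1)`). -/
theorem tendsto_Pq_Pclassical (r : ℕ) (hr : 1 ≤ r) (z : ℂ) (l : ℕ) (hl : l ≤ r - 1) :
    Filter.Tendsto (fun q : ℝ => Pq q r l z)
      (nhdsWithin 1 (Set.Ioo 0 1)) (nhds (Pclassical r l z)) := by
  rw [Pclassical_eq r l z hl]
  unfold Pq
  refine (tendsto_const_nhds.div (tendsto_qFact (r - 1))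
    (by exact_mod_cast Nat.factorial_ne_zero _)).mul ?_
  refine tendsto_finsetSum _ fun A _ => ?_
  have hpow : Filter.Tendsto (fun q : ℝ => (q : ℂ) ^ (∑ m ∈ A, m))
      (nhdsWithin 1 (Set.Ioo 0 1)) (nhds 1) :=
    ((Complex.continuous_ofReal.pow _).tendsto' 1 1 (by simp)).mono_left nhdsWithin_le_nhds
  have hprod : Filter.Tendsto (fun q : ℝ => ∏ m ∈ A, qNum q (z - (m : ℕ)))
      (nhdsWithin 1 (Set.Ioo 0 1)) (nhds (∏ m ∈ A, (z - (m : ℕ)))) :=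
    tendsto_finsetProd _ fun m _ => tendsto_qNum_s7 _
  simpa using hpow.mul hprod
end

section
/- Let z ∈ ℂ with Re(z) > 0, let s ∈ ℂ with Re(s) > 1, and let M ≥ 0 be an integer. Then ∑_{n=0}^{∞} (n+z)^{−s} = z^{1−s}/(s−1) + z^{−s}/2 + ∑_{k=1}^{M} (B_{k+1}/(k+1)!) · (s)_k · z^{−s−k} − ((s)_{M+1}/(M+1)!) · ∫_0^∞ B̃_{M+1}(x) · (x+z)^{−s−M−1} dx, where the integral converges absolutely. -/
/-!
The formula is obtained by repeated integration by parts against the periodic Bernoulli functions.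

On a unit interval `[n, n+1]` the function `B̃_{k+1}/(k+1)` is, up to its value at the right
endpoint, a smooth antiderivative of `B̃_k`. Hence (`integral_unit_step`) integrating by parts turns
`∫ B̃_k(x) (x+z)^c` into boundary terms plus a multiple of `∫ B̃_{k+1}(x) (x+z)^{c-1}`.
Summing over `n < N` and letting `N → ∞` gives two results, both for `Re c < -1`:

* for `k = 0`, `B_1(1) = -B_1(0) = 1/2`, so the boundary terms add up to the series
  `∑ (n+z)^c` minus `z^c/2`, while `∫_0^∞ (x+z)^c dx = -z^{c+1}/(c+1)`; this is the case `M = 0`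
  (`tsum_eq_integral_bernoulli_one`);
* for `k ≥ 1`, `B_{k+1}(1) = B_{k+1}(0)`, so the boundary terms telescope to `-B_{k+1} z^c/(k+1)`
  (`integral_bernoulli_step`); this is the induction step `M → M + 1`.

Everything converges because `‖(x+z)^c‖ ≤ e^{π |Im c|} (x + Re z)^{Re c}` for `Re c ≤ 0`, and the
periodic Bernoulli functions are bounded.
-/

open Complex

/-- The periodic Bernoulli function `B̃_k(x) = B_k(x − ⌊x⌋)`, where `B_k` is the `k`-th
Bernoulli polynomial. -/
noncomputable def periodicBernoulli (k : ℕ) (x : ℝ) : ℝ :=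
  ((Polynomial.bernoulli k).map (algebraMap ℚ ℝ)).eval (Int.fract x)

open MeasureTheory Filter Topology Set

/-! ### Bounds, integrability and summability -/

lemma periodicBernoulli_eq (k : ℕ) (x : ℝ) :
    periodicBernoulli k x = bernoulliFun k (Int.fract x) := rfl

lemma measurable_periodicBernoulli (k : ℕ) : Measurable (periodicBernoulli k) :=
  (continuous_bernoulliFun k).measurable.comp measurable_fract

lemma exists_bound_periodicBernoulli (k : ℕ) : ∃ C, ∀ x, ‖(periodicBernoulli k x : ℂ)‖ ≤ C := by
  obtain ⟨C, hC⟩ := isCompact_Icc.exists_bound_of_continuousOn (s := Icc (0 : ℝ) 1)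
    (continuous_bernoulliFun k).continuousOn
  refine ⟨C, fun x => ?_⟩
  rw [Complex.norm_real]
  exact hC _ ⟨Int.fract_nonneg x, (Int.fract_lt_one x).le⟩

/-- The denominator of `Complex.norm_cpow_of_ne_zero` is controlled by `|arg| ≤ π`, and `‖x + z‖` is
bounded below by its real part. -/
lemma norm_add_cpow_le {z c : ℂ} (hz : 0 < z.re) (hc : c.re ≤ 0) {x : ℝ} (hx : 0 ≤ x) :
    ‖((x : ℂ) + z) ^ c‖ ≤ Real.exp (Real.pi * |c.im|) * (x + z.re) ^ c.re := by
  have hre : 0 < x + z.re := by positivity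
  have h1 : (x + z.re) ≤ ‖(x : ℂ) + z‖ := by
    simpa using Complex.re_le_norm ((x : ℂ) + z)
  have h2 : ‖(x : ℂ) + z‖ ^ c.re ≤ (x + z.re) ^ c.re :=
    Real.rpow_le_rpow_of_nonpos hre h1 hc
  have h3 : Real.exp (-(Complex.arg ((x : ℂ) + z) * c.im)) ≤ Real.exp (Real.pi * |c.im|) := by
    apply Real.exp_le_exp.2
    calc -(Complex.arg ((x : ℂ) + z) * c.im) ≤ |Complex.arg ((x : ℂ) + z) * c.im| := neg_le_abs _
      _ = |Complex.arg ((x : ℂ) + z)| * |c.im| := abs_mul _ _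
      _ ≤ _ := by gcongr; exact Complex.abs_arg_le_pi _
  calc _ ≤ _ := Complex.norm_cpow_le _ _
    _ = Real.exp (-(Complex.arg ((x : ℂ) + z) * c.im)) * ‖(x : ℂ) + z‖ ^ c.re := by
      rw [Real.exp_neg]; ring
    _ ≤ _ := by gcongr

lemma add_mem_slitPlane {z : ℂ} (hz : 0 < z.re) {x : ℝ} (hx : 0 ≤ x) :
    (x : ℂ) + z ∈ Complex.slitPlane := by
  left
  simp only [Complex.add_re, Complex.ofReal_re]
  positivity

lemma hasDerivAt_add_cpow {z : ℂ} (hz : 0 < z.re) (c : ℂ) {x : ℝ} (hx : 0 ≤ x) :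
    HasDerivAt (fun y : ℝ => ((y : ℂ) + z) ^ c) (c * ((x : ℂ) + z) ^ (c - 1)) x := by
  have h := (((hasDerivAt_id (x : ℂ)).add_const z).cpow_const (c := c)
    (add_mem_slitPlane hz hx)).comp_ofReal
  simpa using h

lemma continuousOn_add_cpow {z : ℂ} (hz : 0 < z.re) (c : ℂ) :
    ContinuousOn (fun y : ℝ => ((y : ℂ) + z) ^ c) (Ici 0) :=
  fun _ hx => (hasDerivAt_add_cpow hz c hx).continuousAt.continuousWithinAt

lemma integrableOn_add_cpow {z c : ℂ} (hz : 0 < z.re) (hc : c.re < -1) :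
    IntegrableOn (fun x : ℝ => ((x : ℂ) + z) ^ c) (Ioi 0) := by
  have h := (integrableOn_add_rpow_Ioi_of_lt (c := 0) (m := z.re) hc (by linarith)).const_mul
    (Real.exp (Real.pi * |c.im|))
  refine Integrable.mono' h
    (((continuousOn_add_cpow hz c).mono Ioi_subset_Ici_self).aestronglyMeasurable
      measurableSet_Ioi) ?_
  filter_upwards [ae_restrict_mem measurableSet_Ioi] with x hx
  exact norm_add_cpow_le hz (by linarith) (le_of_lt hx)

lemma integrableOn_bernoulli_mul_cpow {z c : ℂ} (hz : 0 < z.re) (hc : c.re < -1) (k : ℕ) :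
    IntegrableOn (fun x : ℝ => (periodicBernoulli k x : ℂ) * ((x : ℂ) + z) ^ c) (Ioi 0) := by
  obtain ⟨C, hC⟩ := exists_bound_periodicBernoulli k
  exact Integrable.bdd_mul (integrableOn_add_cpow hz hc)
    (Complex.measurable_ofReal.comp (measurable_periodicBernoulli k)).aestronglyMeasurable
    (ae_of_all _ hC)

lemma tendsto_add_cpow {z c : ℂ} (hz : 0 < z.re) (hc : c.re < 0) :
    Tendsto (fun x : ℝ => ((x : ℂ) + z) ^ c) atTop (𝓝 0) := by
  have h1 : Tendsto (fun x : ℝ => (x + z.re) ^ c.re) atTop (𝓝 0) := by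
    have := (tendsto_rpow_neg_atTop (y := -c.re) (by linarith)).comp
      (tendsto_atTop_add_const_right atTop z.re tendsto_id)
    simpa [Function.comp_def] using this
  have h2 := h1.const_mul (Real.exp (Real.pi * |c.im|))
  rw [mul_zero] at h2
  refine squeeze_zero_norm' ?_ h2
  filter_upwards [eventually_ge_atTop 0] with x hx
  exact norm_add_cpow_le hz hc.le hx

lemma tendsto_nat_add_cpow {z c : ℂ} (hz : 0 < z.re) (hc : c.re < 0) :
    Tendsto (fun n : ℕ => ((n : ℂ) + z) ^ c) atTop (𝓝 0) := by
  simpa [Function.comp_def] using (tendsto_add_cpow hz hc).comp tendsto_natCast_atTop_atTop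

lemma summable_nat_add_cpow {z c : ℂ} (hz : 0 < z.re) (hc : c.re < -1) :
    Summable (fun n : ℕ => ((n : ℂ) + z) ^ c) := by
  have h := ((Real.summable_one_div_nat_add_rpow z.re (-c.re)).2 (by linarith)).mul_left
    (Real.exp (Real.pi * |c.im|))
  refine Summable.of_norm_bounded h fun n => ?_
  have h0 : (0 : ℝ) < n + z.re := by positivity
  have := norm_add_cpow_le hz (c := c) (by linarith) (Nat.cast_nonneg (α := ℝ) n)
  rw [abs_of_pos h0, Real.rpow_neg h0.le, one_div, inv_inv]
  simpa using this

lemma integral_add_cpow {z c : ℂ} (hz : 0 < z.re) (hc : c.re < -1) :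
    ∫ x in Ioi (0 : ℝ), ((x : ℂ) + z) ^ c = -(z ^ (c + 1) / (c + 1)) := by
  have hne : c + 1 ≠ 0 := fun h => by
    have := congrArg Complex.re h
    simp at this
    linarith
  have hd : ∀ x : ℝ, 0 ≤ x →
      HasDerivAt (fun y : ℝ => ((y : ℂ) + z) ^ (c + 1) / (c + 1)) (((x : ℂ) + z) ^ c) x := by
    intro x hx
    have := (hasDerivAt_add_cpow hz (c + 1) hx).div_const (c + 1)
    rwa [add_sub_cancel_right, mul_div_cancel_left₀ _ hne] at this
  have ht : Tendsto (fun y : ℝ => ((y : ℂ) + z) ^ (c + 1) / (c + 1)) atTop (𝓝 0) := by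
    have := (tendsto_add_cpow hz (c := c + 1) (by simp; linarith)).div_const (c + 1)
    rwa [zero_div] at this
  rw [integral_Ioi_of_hasDerivAt_of_tendsto (hd 0 le_rfl).continuousAt.continuousWithinAt
    (fun x hx => hd x (le_of_lt hx)) (integrableOn_add_cpow hz hc) ht]
  simp

/-! ### Integration by parts on unit intervals -/

/-- Integration by parts on `[n, n+1]`. The endpoint values are those of the Bernoulli polynomial
itself, so that at `n + 1` it is `B_{k+1}(1)`, not `B̃_{k+1}(n+1) = B_{k+1}(0)`, that occurs. -/
lemma integral_unit_step {z : ℂ} (hz : 0 < z.re) (c : ℂ) (k n : ℕ) :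
    ∫ x in (n : ℝ)..((n + 1 : ℕ) : ℝ), (periodicBernoulli k x : ℂ) * ((x : ℂ) + z) ^ c
      = ((bernoulliFun (k + 1) 1 : ℂ) * (((n + 1 : ℕ) : ℂ) + z) ^ c
          - (bernoulliFun (k + 1) 0 : ℂ) * ((n : ℂ) + z) ^ c) / (k + 1)
        - c / (k + 1) * ∫ x in (n : ℝ)..((n + 1 : ℕ) : ℝ),
            (periodicBernoulli (k + 1) x : ℂ) * ((x : ℂ) + z) ^ (c - 1) := by
  have hle : (n : ℝ) ≤ ((n + 1 : ℕ) : ℝ) := by push_cast; linarith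
  -- inside the interval the periodic function is a translate of the polynomial
  have hper : ∀ (j : ℕ) (e : ℂ),
      ∫ x in (n : ℝ)..((n + 1 : ℕ) : ℝ), (periodicBernoulli j x : ℂ) * ((x : ℂ) + z) ^ e
        = ∫ x in (n : ℝ)..((n + 1 : ℕ) : ℝ), ((x : ℂ) + z) ^ e * (bernoulliFun j (x - n) : ℂ) := by
    intro j e
    refine intervalIntegral.integral_congr_Ioo_of_le hle fun x hx => ?_
    have hfr : Int.fract x = x - n := by
      rw [Int.fract_eq_iff]
      push_cast at hx
      exact ⟨by linarith [hx.1], by linarith [hx.2], n, by simp⟩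
    simp only [periodicBernoulli_eq, hfr, mul_comm]
  have hpos : ∀ x ∈ uIcc (n : ℝ) ((n + 1 : ℕ) : ℝ), 0 ≤ x := by
    intro x hx
    rw [uIcc_of_le hle] at hx
    exact (Nat.cast_nonneg n).trans hx.1
  have hv : ∀ x ∈ uIcc (n : ℝ) ((n + 1 : ℕ) : ℝ),
      HasDerivAt (fun y : ℝ => ((bernoulliFun (k + 1) (y - n) / (k + 1) : ℝ) : ℂ))
        (bernoulliFun k (x - n) : ℂ) x := by
    intro x _
    exact ((antideriv_bernoulliFun k (x - n)).comp_sub_const x (n : ℝ)).ofReal_comp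
  have hibp := intervalIntegral.integral_mul_deriv_eq_deriv_mul
    (fun x hx => hasDerivAt_add_cpow hz c (hpos x hx)) hv
    (((continuousOn_add_cpow hz (c - 1)).mono hpos).const_smul c).intervalIntegrable
    (by
      apply Continuous.intervalIntegrable
      exact Complex.continuous_ofReal.comp
        ((continuous_bernoulliFun k).comp (continuous_id.sub continuous_const)))
  have hlast : ∫ x in (n : ℝ)..((n + 1 : ℕ) : ℝ), c * ((x : ℂ) + z) ^ (c - 1) *
        ((bernoulliFun (k + 1) (x - n) / (k + 1) : ℝ) : ℂ)
      = c / (k + 1) * ∫ x in (n : ℝ)..((n + 1 : ℕ) : ℝ),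
        ((x : ℂ) + z) ^ (c - 1) * (bernoulliFun (k + 1) (x - n) : ℂ) := by
    rw [← intervalIntegral.integral_const_mul]
    congr 1
    ext x
    push_cast
    ring
  rw [hper, hper, hibp, hlast]
  have e1 : ((n + 1 : ℕ) : ℝ) - n = 1 := by push_cast; ring
  rw [e1, sub_self]
  push_cast
  ring

lemma sum_unit_integrals {z c : ℂ} (hz : 0 < z.re) (hc : c.re < -1) (k N : ℕ) :
    ∑ n ∈ Finset.range N, ∫ x in (n : ℝ)..((n + 1 : ℕ) : ℝ),
        (periodicBernoulli k x : ℂ) * ((x : ℂ) + z) ^ c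
      = ∫ x in (0 : ℝ)..N, (periodicBernoulli k x : ℂ) * ((x : ℂ) + z) ^ c := by
  have h := intervalIntegral.sum_integral_adjacent_intervals (μ := volume)
    (f := fun x : ℝ => (periodicBernoulli k x : ℂ) * ((x : ℂ) + z) ^ c)
    (a := fun n : ℕ => (n : ℝ)) (n := N) (fun n _ => by
      rw [intervalIntegrable_iff_integrableOn_Ioc_of_le (by push_cast; linarith)]
      refine (integrableOn_bernoulli_mul_cpow hz hc k).mono_set fun x hx => ?_
      exact lt_of_le_of_lt (Nat.cast_nonneg n) hx.1)
  simpa using h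

/-! ### Passage to the limit -/

/-- The sum of the integrations by parts over all unit intervals: the boundary terms converge to
a linear combination of the two improper integrals. -/
lemma tendsto_sum_boundary {z c : ℂ} (hz : 0 < z.re) (hc : c.re < -1) (k : ℕ) :
    Tendsto (fun N : ℕ => ∑ n ∈ Finset.range N,
        ((bernoulliFun (k + 1) 1 : ℂ) * (((n + 1 : ℕ) : ℂ) + z) ^ c
          - (bernoulliFun (k + 1) 0 : ℂ) * ((n : ℂ) + z) ^ c) / (k + 1)) atTop
      (𝓝 ((∫ x in Ioi (0 : ℝ), (periodicBernoulli k x : ℂ) * ((x : ℂ) + z) ^ c)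
        + c / (k + 1) * ∫ x in Ioi (0 : ℝ),
            (periodicBernoulli (k + 1) x : ℂ) * ((x : ℂ) + z) ^ (c - 1))) := by
  have hc' : (c - 1).re < -1 := by simp; linarith
  have t1 := intervalIntegral_tendsto_integral_Ioi (0 : ℝ)
    (integrableOn_bernoulli_mul_cpow hz hc k) (tendsto_natCast_atTop_atTop (R := ℝ))
  have t2 := intervalIntegral_tendsto_integral_Ioi (0 : ℝ)
    (integrableOn_bernoulli_mul_cpow hz hc' (k + 1)) (tendsto_natCast_atTop_atTop (R := ℝ))
  refine (t1.add (t2.const_mul (c / (k + 1)))).congr fun N => ?_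
  rw [← sum_unit_integrals hz hc, ← sum_unit_integrals hz hc', Finset.mul_sum,
    ← Finset.sum_add_distrib]
  refine Finset.sum_congr rfl fun n _ => ?_
  rw [integral_unit_step hz c k n]
  ring

lemma integral_bernoulli_step {z c : ℂ} (hz : 0 < z.re) (hc : c.re < -1) {k : ℕ} (hk : k ≠ 0) :
    ∫ x in Ioi (0 : ℝ), (periodicBernoulli k x : ℂ) * ((x : ℂ) + z) ^ c
      = -((bernoulli (k + 1) : ℂ) / (k + 1) * z ^ c)
        - c / (k + 1) * ∫ x in Ioi (0 : ℝ),
            (periodicBernoulli (k + 1) x : ℂ) * ((x : ℂ) + z) ^ (c - 1) := by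
  have h1 := tendsto_sum_boundary hz hc k
  have h2 : Tendsto (fun N : ℕ => ∑ n ∈ Finset.range N,
        ((bernoulliFun (k + 1) 1 : ℂ) * (((n + 1 : ℕ) : ℂ) + z) ^ c
          - (bernoulliFun (k + 1) 0 : ℂ) * ((n : ℂ) + z) ^ c) / (k + 1)) atTop
      (𝓝 ((bernoulli (k + 1) : ℂ) / (k + 1) * (0 - z ^ c))) := by
    refine (((tendsto_nat_add_cpow hz (c := c) (by linarith)).sub_const (z ^ c)).const_mul
      ((bernoulli (k + 1) : ℂ) / (k + 1))).congr fun N => ?_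
    have htel := Finset.sum_range_sub (fun n : ℕ => ((n : ℂ) + z) ^ c) N
    simp only [Nat.cast_zero, zero_add] at htel
    rw [← htel, Finset.mul_sum]
    refine Finset.sum_congr rfl fun n _ => ?_
    rw [bernoulliFun_endpoints_eq_of_ne_one (by omega), bernoulliFun_eval_zero]
    push_cast
    ring
  linear_combination tendsto_nhds_unique h1 h2

lemma tsum_eq_integral_bernoulli_one {z c : ℂ} (hz : 0 < z.re) (hc : c.re < -1) :
    ∑' n : ℕ, ((n : ℂ) + z) ^ c = -(z ^ (c + 1) / (c + 1)) + z ^ c / 2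
      + c * ∫ x in Ioi (0 : ℝ), (periodicBernoulli 1 x : ℂ) * ((x : ℂ) + z) ^ (c - 1) := by
  have h1 := tendsto_sum_boundary hz hc 0
  have hs := summable_nat_add_cpow hz hc
  have hs' : Summable (fun n : ℕ => (((n + 1 : ℕ) : ℂ) + z) ^ c) :=
    (summable_nat_add_iff 1).2 hs
  have h2 := ((hs'.hasSum.add hs.hasSum).div_const 2).tendsto_sum_nat
  have h3 := tendsto_nhds_unique h1 (h2.congr fun N => Finset.sum_congr rfl fun n _ => by
    simp only [zero_add, bernoulliFun_one]
    push_cast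
    ring)
  have h4 := hs.tsum_eq_zero_add
  simp only [periodicBernoulli_eq 0, bernoulliFun_zero, Complex.ofReal_one, one_mul,
    integral_add_cpow hz hc, zero_add, Nat.cast_zero, div_one] at h3 h4
  linear_combination (1 / 2) * h4 - h3

/-! ### The expansion -/

/-- Euler–Maclaurin expansion of the Hurwitz zeta function: for `Re z > 0`, `Re s > 1`
and any integer `M ≥ 0`,
`∑_{n≥0} (n+z)^{−s} = z^{1−s}/(s−1) + z^{−s}/2 + ∑_{k=1}^{M} (B_{k+1}/(k+1)!)(s)_k z^{−s−k}
  − ((s)_{M+1}/(M+1)!) ∫_0^∞ B̃_{M+1}(x) (x+z)^{−s−M−1} dx`,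
the integral converging absolutely. -/
theorem hurwitz_euler_maclaurin (z s : ℂ) (hz : 0 < z.re) (hs : 1 < s.re) (M : ℕ) :
    MeasureTheory.IntegrableOn
      (fun x : ℝ => (periodicBernoulli (M + 1) x : ℂ) * ((x : ℂ) + z) ^ (-s - (M : ℂ) - 1))
      (Set.Ioi 0) ∧
    ∑' n : ℕ, ((n : ℂ) + z) ^ (-s)
      = z ^ (1 - s) / (s - 1) + z ^ (-s) / 2
        + (∑ k ∈ Finset.Icc 1 M,
            ((bernoulli (k + 1) : ℂ) / ((k + 1).factorial : ℂ)) *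
              (ascPochhammer ℂ k).eval s * z ^ (-s - (k : ℂ)))
        - ((ascPochhammer ℂ (M + 1)).eval s / ((M + 1).factorial : ℂ)) *
            ∫ x in Set.Ioi (0 : ℝ),
              (periodicBernoulli (M + 1) x : ℂ) * ((x : ℂ) + z) ^ (-s - (M : ℂ) - 1) := by
  have hre : ∀ k : ℕ, (-s - (k : ℂ)).re < -1 := fun k => by
    have : (0 : ℝ) ≤ k := Nat.cast_nonneg k
    simp only [Complex.sub_re, Complex.neg_re, Complex.natCast_re]
    linarith
  refine ⟨integrableOn_bernoulli_mul_cpow hz ?_ (M + 1), ?_⟩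
  · have := hre M
    rw [Complex.sub_re, Complex.one_re]
    linarith
  induction M with
  | zero =>
    have hc : (-s).re < -1 := by simpa using hre 0
    have hdiv : -(z ^ (-s + 1) / (-s + 1)) = z ^ (1 - s) / (s - 1) := by
      rw [show -s + 1 = 1 - s by ring, show s - 1 = -(1 - s) by ring, div_neg]
    rw [tsum_eq_integral_bernoulli_one hz hc, hdiv]
    simp
    ring
  | succ M ih =>
    rw [ih, Finset.sum_Icc_succ_top (by omega)]
    have hstep := integral_bernoulli_step hz (hre (M + 1)) (Nat.succ_ne_zero M)
    have e : -s - (M : ℂ) - 1 = -s - ((M + 1 : ℕ) : ℂ) := by push_cast; ring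
    rw [e, hstep, ascPochhammer_succ_eval (M + 1), Nat.factorial_succ (M + 1)]
    have hf : (((M + 1).factorial : ℕ) : ℂ) ≠ 0 := by exact_mod_cast Nat.factorial_ne_zero _
    have hM : ((M + 1 : ℕ) : ℂ) + 1 ≠ 0 := by exact_mod_cast Nat.succ_ne_zero (M + 1)
    simp only [Nat.cast_mul, Nat.cast_add_one (M + 1)]
    field_simp
    ring
end

section
/- Let q be real with 0 < q < 1, let r ≥ 1 be an integer, let ω_1, …, ω_r be positive reals, let s ∈ ℂ, let t ∈ ℂ with Re(t) > r − 1, and let z ∈ ℂ with Re(z) > 0. Then the family (n1,…,nr) ↦ q^{n1·ω_1·t + n2·ω_2·(t−1) + ⋯ + nr·ω_r·(t−r+1)} / [n1·ω_1 + ⋯ + nr·ω_r + z]_q^s, indexed by r-tuples of nonnegative integers, is absolutely summable. -/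
/-!
Since `Re (n₁ω₁ + ⋯ + n_rω_r + z) ≥ Re z > 0`, the `q`-numbers in the denominators all lie in a
fixed annulus `(1 - q^{Re z})/(1 - q) ≤ |w| ≤ 2/(1 - q)`, on which `|w^s|⁻¹` is bounded, because
`|log w|` is (`norm_inv_cpow_le`, `qNum_norm_bounds`). The numerator has norm
`∏ i, (q^{ω_i (Re t - i)})^{n_i}` (indices from `0`), a product of geometric terms with ratios
less than `1` because `Re t > r - 1`; such a product is summable over tuples
(`summable_pi_prod`).
-/

open Complex

lemma summable_pi_prod : ∀ (r : ℕ) (g : Fin r → ℕ → ℝ), (∀ i n, 0 ≤ g i n) →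
    (∀ i, Summable (g i)) → Summable (fun f : Fin r → ℕ => ∏ i, g i (f i)) := by
  intro r
  induction r with
  | zero => intro g _ _; exact Summable.of_finite
  | succ r ih =>
    intro g h0 hs
    have h := (hs 0).mul_of_nonneg
      (ih (fun i => g i.succ) (fun i n => h0 _ n) (fun i => hs _))
      (h0 0) (fun f => Finset.prod_nonneg fun i _ => h0 _ _)
    rw [← (Fin.consEquiv (fun _ : Fin (r + 1) => ℕ)).summable_iff]
    refine h.congr fun p => ?_
    simp [Fin.prod_univ_succ, Fin.consEquiv]

/-- The inverse of `w ^ s` is bounded uniformly for `w` in an annulus around `0`. -/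
lemma norm_inv_cpow_le {a b : ℝ} (ha : 0 < a) (s w : ℂ) (h1 : a ≤ ‖w‖) (h2 : ‖w‖ ≤ b) :
    ‖(w ^ s)⁻¹‖ ≤ Real.exp ((max |Real.log a| |Real.log b| + Real.pi) * ‖s‖) := by
  have hw : 0 < ‖w‖ := ha.trans_le h1
  rw [cpow_def_of_ne_zero (norm_pos_iff.1 hw), ← Complex.exp_neg]
  refine (norm_exp_le_exp_norm _).trans (Real.exp_le_exp.2 ?_)
  rw [norm_neg, norm_mul]
  refine mul_le_mul_of_nonneg_right ?_ (norm_nonneg s)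
  refine (norm_le_abs_re_add_abs_im _).trans (add_le_add ?_ ?_)
  · rw [log_re]
    exact abs_le_max_abs_abs (Real.log_le_log ha h1) (Real.log_le_log hw h2)
  · rw [log_im]
    exact abs_arg_le_pi w

lemma qNum_norm_bounds {q : ℝ} (hq0 : 0 < q) (hq1 : q < 1) {x : ℝ} (hx : 0 < x) (w : ℂ)
    (hw : x ≤ w.re) :
    (1 - q ^ x) / (1 - q) ≤ ‖qNum q w‖ ∧ ‖qNum q w‖ ≤ 2 / (1 - q) := by
  have h1q : 0 < 1 - q := sub_pos.2 hq1
  have hd : ‖(1 - (q : ℂ))‖ = 1 - q := by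
    rw [← ofReal_one, ← ofReal_sub, norm_real, Real.norm_of_nonneg h1q.le]
  have hn : ‖(q : ℂ) ^ w‖ ≤ q ^ x := by
    rw [norm_cpow_eq_rpow_re_of_pos hq0]
    exact Real.rpow_le_rpow_of_exponent_ge hq0 hq1.le hw
  have hlt : q ^ x < 1 := Real.rpow_lt_one hq0.le hq1 hx
  have hlow := norm_sub_norm_le (1 : ℂ) ((q : ℂ) ^ w)
  have hupp := norm_sub_le (1 : ℂ) ((q : ℂ) ^ w)
  rw [norm_one] at hlow hupp
  rw [qNum, norm_div, hd]
  constructor <;> refine div_le_div_of_nonneg_right ?_ h1q.le <;> linarith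

/-- For `0 < q < 1`, `r ≥ 1`, positive reals `ω₁,…,ω_r`, `Re t > r − 1` and `Re z > 0`,
the family `(n₁,…,n_r) ↦ q^{n₁ω₁t + n₂ω₂(t−1) + ⋯ + n_rω_r(t−r+1)} / [n₁ω₁+⋯+n_rω_r+z]_q^s`
indexed by `r`-tuples of nonnegative integers is absolutely summable. -/
theorem zetaQOmega_term_summable (q : ℝ) (hq0 : 0 < q) (hq1 : q < 1) (r : ℕ)
    (hr : 1 ≤ r) (ω : Fin r → ℝ) (hω : ∀ i, 0 < ω i) (s t z : ℂ)
    (ht : (r : ℝ) - 1 < t.re) (hz : 0 < z.re) :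
    Summable (fun f : Fin r → ℕ =>
      ‖(q : ℂ) ^ (∑ i : Fin r, (f i : ℂ) * (ω i : ℂ) * (t - (i : ℕ)))
        / (qNum q (((∑ i : Fin r, (f i : ℝ) * ω i : ℝ) : ℂ) + z)) ^ s‖) := by
  have hpos : ∀ i : Fin r, 0 < ω i * (t.re - (i : ℕ)) := fun i => by
    have hi : ((i : ℕ) : ℝ) + 1 ≤ r := by exact_mod_cast i.isLt
    exact mul_pos (hω i) (by linarith)
  have hsum := summable_pi_prod r (fun i n => (q ^ (ω i * (t.re - (i : ℕ)))) ^ n)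
    (fun i n => by positivity)
    (fun i => summable_geometric_of_lt_one (by positivity)
      (Real.rpow_lt_one hq0.le hq1 (hpos i)))
  have ha : 0 < (1 - q ^ z.re) / (1 - q) :=
    div_pos (sub_pos.2 (Real.rpow_lt_one hq0.le hq1 hz)) (sub_pos.2 hq1)
  refine Summable.of_nonneg_of_le (fun f => norm_nonneg _) (fun f => ?_)
    (hsum.mul_right (Real.exp ((max |Real.log ((1 - q ^ z.re) / (1 - q))|
      |Real.log (2 / (1 - q))| + Real.pi) * ‖s‖)))
  have hnum : ‖(q : ℂ) ^ (∑ i : Fin r, (f i : ℂ) * (ω i : ℂ) * (t - (i : ℕ)))‖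
      = ∏ i, (q ^ (ω i * (t.re - (i : ℕ)))) ^ f i := by
    rw [norm_cpow_eq_rpow_re_of_pos hq0, re_sum, Real.rpow_sum_of_pos hq0]
    refine Finset.prod_congr rfl fun i _ => ?_
    rw [← Real.rpow_mul_natCast hq0.le]
    congr 1
    simp
    ring
  have hre : z.re ≤ (((∑ i : Fin r, (f i : ℝ) * ω i : ℝ) : ℂ) + z).re := by
    rw [add_re, ofReal_re]
    have : 0 ≤ ∑ i : Fin r, (f i : ℝ) * ω i :=
      Finset.sum_nonneg fun i _ => mul_nonneg (Nat.cast_nonneg _) (hω i).le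
    linarith
  obtain ⟨h1, h2⟩ := qNum_norm_bounds hq0 hq1 hz _ hre
  rw [div_eq_mul_inv, norm_mul, hnum]
  exact mul_le_mul_of_nonneg_left (norm_inv_cpow_le ha s _ h1 h2)
    (Finset.prod_nonneg fun i _ => by positivity)
end

section
/- Let q be real with 0 < q < 1, let ω > 0 be real, let s ∈ ℂ, let t ∈ ℂ with Re(t) > 0, and let z ∈ ℂ with Re(z) > 0. Then ∑_{n=0}^{∞} q^{nωt} / [nω+z]_q^s = [ω]_q^{−s} · ∑_{n=0}^{∞} (q^ω)^{nt} / [n + z/ω]_{q^ω}^s; that is, ζ_{q,1}(s,t,z;ω) = [ω]_q^{−s} · ζ_{q^ω,1}(s,t,z/ω). -/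
/-!
The identity holds term by term: `(q^ω)^w = q^(ωw)`, hence
`[nω+z]_q = [ω]_q · [n+z/ω]_{q^ω}`. Since `[ω]_q` is a positive real, it does not change
arguments, so the principal power `(·)^s` is multiplicative on this product. Pulling the
constant `[ω]_q^{-s}` out of the series needs no convergence, because `tsum_mul_left` holds
in a division ring whether or not the series is summable.
-/

open Complex

/-- A positive real factor can be pulled out of a principal complex power. The case `x = 0` is
included thanks to the conventions `0 ^ 0 = 1` and `0 ^ s = 0` for `s ≠ 0`. -/
lemma ofReal_mul_cpow {a : ℝ} (ha : 0 < a) (x s : ℂ) :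
    ((a : ℂ) * x) ^ s = (a : ℂ) ^ s * x ^ s := by
  have h1 : (a : ℂ) ≠ 0 := ofReal_ne_zero.mpr ha.ne'
  by_cases hx : x = 0
  · subst hx
    by_cases hs : s = 0
    · simp [hs]
    · simp [zero_cpow hs]
  · rw [cpow_def_of_ne_zero (mul_ne_zero h1 hx), cpow_def_of_ne_zero h1, cpow_def_of_ne_zero hx,
      log_ofReal_mul ha hx, ← exp_add, ofReal_log ha.le, add_mul]

/-- The scaling rule `[ωw]_q = [ω]_q · [w]_{q^ω}`. -/
lemma qNum_scaling {q : ℝ} (hq0 : 0 < q) (hq1 : q < 1) {ω : ℝ} (hω : 0 < ω) (w : ℂ) :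
    qNum q ((ω : ℂ) * w) = (((1 - q ^ ω) / (1 - q) : ℝ) : ℂ) * qNum (q ^ ω) w := by
  have h2 : (1 : ℂ) - ((q ^ ω : ℝ) : ℂ) ≠ 0 := by
    exact_mod_cast (sub_pos.mpr (Real.rpow_lt_one hq0.le hq1 hω)).ne'
  rw [qNum, qNum, ← cpow_mul_ofReal_nonneg hq0.le, ofReal_div, ofReal_sub, ofReal_sub, ofReal_one,
    div_mul_div_comm, mul_comm (1 - (q : ℂ)), mul_div_mul_left _ _ h2]

/-- For `0 < q < 1`, real `ω > 0`, `Re t > 0` and `Re z > 0`: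
`∑_{n≥0} q^{nωt}/[nω+z]_q^s = [ω]_q^{−s} ∑_{n≥0} (q^ω)^{nt}/[n+z/ω]_{q^ω}^s`,
i.e. `ζ_{q,1}(s,t,z;ω) = [ω]_q^{−s} ζ_{q^ω,1}(s,t,z/ω)`. -/
theorem zetaQ_one_omega_scaling (q : ℝ) (hq0 : 0 < q) (hq1 : q < 1) (ω : ℝ) (hω : 0 < ω)
    (s t z : ℂ) (ht : 0 < t.re) (hz : 0 < z.re) :
    ∑' n : ℕ, (q : ℂ) ^ ((n : ℂ) * (ω : ℂ) * t) / (qNum q (((n : ℝ) * ω : ℝ) + z)) ^ s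
      = (((1 - q ^ ω) / (1 - q) : ℝ) : ℂ) ^ (-s) *
          ∑' n : ℕ, ((q ^ ω : ℝ) : ℂ) ^ ((n : ℂ) * t)
            / (qNum (q ^ ω) ((n : ℂ) + z / (ω : ℂ))) ^ s := by
  have hωpos : 0 < (1 - q ^ ω) / (1 - q) :=
    div_pos (sub_pos.mpr (Real.rpow_lt_one hq0.le hq1 hω)) (sub_pos.mpr hq1)
  have hω0 : (ω : ℂ) ≠ 0 := ofReal_ne_zero.mpr hω.ne'
  rw [← tsum_mul_left]
  refine tsum_congr fun n => ?_
  have harg : (((n : ℝ) * ω : ℝ) : ℂ) + z = (ω : ℂ) * ((n : ℂ) + z / (ω : ℂ)) := by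
    push_cast
    field_simp
  rw [harg, qNum_scaling hq0 hq1 hω, ofReal_mul_cpow hωpos, ← cpow_mul_ofReal_nonneg hq0.le, cpow_neg,
    mul_left_comm (ω : ℂ), ← mul_assoc (n : ℂ), div_mul_eq_div_div_swap, div_eq_inv_mul _ (_ ^ s)]
end

section
/- Let q be real with 0 < q < 1. Then for every real z > 0 one has F_q(z+1) = F_q(z) + q^{−z} · (log [z]_q − z · log q), and F_q(1) = 0; equivalently, Γ̃_q(z+1) = (q^{−z}·[z]_q)^{q^{−z}} · Γ̃_q(z) and Γ̃_q(1) = 1. -/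
/-!
Write `x = q ^ z ∈ (0, 1)`. The `n`-th term of the series in `F_q` changes by
`-x ^ (n + 1) / (n + 2)` when `z` is replaced by `z + 1`, because
`q ^ ((z + 1) (n + 1)) - q ^ (z (n + 1)) = -x ^ (n + 1) (1 - q ^ (n + 1))` cancels the denominator.
The total change of the series is therefore a tail of the Mercator series, equal to
`1 + log (1 - x) / x` (`hasSum_mercator_tail`). Splitting the difference of the two series into a
series of differences needs convergence of each (`summable_Fq_terms`). The elementary terms of
`F_q` change by `-1`, `-z q ^ (-z) log q` and `-q ^ (-z) log (1 - q)`, which gives the ladder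
relation. At `z = 1` every term vanishes, and the statements on `Γ̃_q` follow by exponentiating.
-/

/-- The logarithm `F_q(z) = log Γ̃_q(z)` of the `q`-gamma function associated with the
`q`-Hurwitz zeta function, given by its explicit closed form: for real `z > 0`,
`F_q(z) = ∑_{n=2}^∞ (1/n)(q^{z(n−1)} − q^{n−1})/(1 − q^{n−1}) − z + 1
  + ((q^{−z}(1 − (1−q)z) − 1)/(1−q)²) q log q + ((1 − q^{1−z})/(1−q)) log(1−q)`
(real powers of `q` via `rpow`). -/
noncomputable def Fq (q z : ℝ) : ℝ :=
  (∑' n : ℕ, (1 / ((n : ℝ) + 2)) *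
      (q ^ (z * ((n : ℝ) + 1)) - q ^ ((n : ℝ) + 1)) / (1 - q ^ ((n : ℝ) + 1)))
    - z + 1
    + ((q ^ (-z) * (1 - (1 - q) * z) - 1) / (1 - q) ^ 2) * q * Real.log q
    + ((1 - q ^ (1 - z)) / (1 - q)) * Real.log (1 - q)

/-- The `q`-gamma function `Γ̃_q(z) = exp F_q(z)` associated with the `q`-Hurwitz zeta
function. -/
noncomputable def GammaQ (q z : ℝ) : ℝ := Real.exp (Fq q z)

/-- The series term of `F_q` with its real powers rewritten as natural powers of `q ^ z` and `q`. -/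
lemma Fq_term_eq {q : ℝ} (hq0 : 0 < q) (z : ℝ) (n : ℕ) :
    (1 / ((n : ℝ) + 2)) *
      (q ^ (z * ((n : ℝ) + 1)) - q ^ ((n : ℝ) + 1)) / (1 - q ^ ((n : ℝ) + 1))
    = (1 / ((n : ℝ) + 2)) * ((q ^ z) ^ (n + 1) - q ^ (n + 1)) / (1 - q ^ (n + 1)) := by
  have h1 : q ^ ((n : ℝ) + 1) = q ^ (n + 1) := by
    rw [← Real.rpow_natCast]; push_cast; rfl
  have h2 : q ^ (z * ((n : ℝ) + 1)) = (q ^ z) ^ (n + 1) := by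
    rw [Real.rpow_mul hq0.le, ← Real.rpow_natCast]; push_cast; rfl
  rw [h1, h2]

lemma summable_Fq_terms {q x : ℝ} (hq0 : 0 < q) (hq1 : q < 1) (hx0 : 0 < x) (hx1 : x < 1) :
    Summable fun n : ℕ =>
      (1 / ((n : ℝ) + 2)) * (x ^ (n + 1) - q ^ (n + 1)) / (1 - q ^ (n + 1)) := by
  have hs : Summable fun n : ℕ => (x ^ n + q ^ n) / (1 - q) :=
    ((summable_geometric_of_lt_one hx0.le hx1).add
      (summable_geometric_of_lt_one hq0.le hq1)).div_const _
  refine Summable.of_norm_bounded hs fun n => ?_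
  have hqn : q ^ (n + 1) ≤ q := pow_le_of_le_one hq0.le hq1.le (Nat.succ_ne_zero n)
  have hden : 0 < 1 - q ^ (n + 1) := by linarith
  have hfrac : 1 / ((n : ℝ) + 2) ≤ 1 := by
    rw [div_le_one (by positivity)]
    linarith [(Nat.cast_nonneg n : (0 : ℝ) ≤ n)]
  have hnum : |x ^ (n + 1) - q ^ (n + 1)| ≤ x ^ n + q ^ n := by
    have h1 : x ^ (n + 1) ≤ x ^ n := pow_le_pow_of_le_one hx0.le hx1.le n.le_succ
    have h2 : q ^ (n + 1) ≤ q ^ n := pow_le_pow_of_le_one hq0.le hq1.le n.le_succ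
    have h3 : 0 < x ^ (n + 1) := by positivity
    have h4 : 0 < q ^ (n + 1) := by positivity
    rw [abs_le]; constructor <;> linarith
  rw [Real.norm_eq_abs, abs_div, abs_mul, abs_of_pos hden,
    abs_of_pos (show (0 : ℝ) < 1 / ((n : ℝ) + 2) by positivity)]
  refine div_le_div₀ (by positivity) ?_ (by linarith) (by linarith)
  calc 1 / ((n : ℝ) + 2) * |x ^ (n + 1) - q ^ (n + 1)|
      ≤ 1 * |x ^ (n + 1) - q ^ (n + 1)| := by gcongr
    _ ≤ x ^ n + q ^ n := by rw [one_mul]; exact hnum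

/-- The Mercator series for `log (1 - x)`, with its first term removed and divided by `-x`. -/
lemma hasSum_mercator_tail {x : ℝ} (hx0 : 0 < x) (hx1 : x < 1) :
    HasSum (fun n : ℕ => -(x ^ (n + 1) / ((n : ℝ) + 2))) (x⁻¹ * Real.log (1 - x) + 1) := by
  have h := Real.hasSum_pow_div_log_of_abs_lt_one (x := x) (by rwa [abs_of_pos hx0])
  have h' := ((hasSum_nat_add_iff' 1).mpr h).mul_left (-x⁻¹)
  have hval : -x⁻¹ * (-Real.log (1 - x) - ∑ i ∈ Finset.range 1, x ^ (i + 1) / ((i : ℝ) + 1))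
      = x⁻¹ * Real.log (1 - x) + 1 := by
    simp
    field_simp
    ring
  rw [hval] at h'
  have hfun : (fun n : ℕ => -(x ^ (n + 1) / ((n : ℝ) + 2)))
      = fun n : ℕ => -x⁻¹ * (x ^ (n + 1 + 1) / (((n + 1 : ℕ) : ℝ) + 1)) := by
    funext n
    have hn : (((n + 1 : ℕ) : ℝ) + 1) = (n : ℝ) + 2 := by push_cast; ring
    rw [hn]
    field_simp
    ring
  rw [hfun]
  exact h'

lemma Fq_ladder {q : ℝ} (hq0 : 0 < q) (hq1 : q < 1) {z : ℝ} (hz : 0 < z) :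
    Fq q (z + 1)
      = Fq q z + q ^ (-z) * (Real.log ((1 - q ^ z) / (1 - q)) - z * Real.log q) := by
  have hx0 : 0 < q ^ z := Real.rpow_pos_of_pos hq0 z
  have hx1 : q ^ z < 1 := Real.rpow_lt_one hq0.le hq1 hz
  have hadd : q ^ (z + 1) = q ^ z * q := by rw [Real.rpow_add hq0, Real.rpow_one]
  have hneg : q ^ (-z) = (q ^ z)⁻¹ := Real.rpow_neg hq0.le z
  have hnegadd : q ^ (-(z + 1)) = (q ^ z)⁻¹ * q⁻¹ := by
    rw [Real.rpow_neg hq0.le, hadd, mul_inv]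
  have hsub : q ^ (1 - z) = q * (q ^ z)⁻¹ := by
    rw [Real.rpow_sub hq0, Real.rpow_one, div_eq_mul_inv]
  have hsub' : q ^ (1 - (z + 1)) = (q ^ z)⁻¹ := by
    rw [← hneg]; congr 1; ring
  unfold Fq
  simp only [Fq_term_eq hq0]
  rw [hadd, hneg, hnegadd, hsub, hsub', Real.log_div (by linarith) (by linarith)]
  generalize q ^ z = x at *
  have hxq0 : 0 < x * q := mul_pos hx0 hq0
  have hxq1 : x * q < 1 := mul_lt_one_of_nonneg_of_lt_one_left hx0.le hx1 hq1.le
  have hseries := ((summable_Fq_terms hq0 hq1 hxq0 hxq1).tsum_sub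
    (summable_Fq_terms hq0 hq1 hx0 hx1)).symm
  have hterm : ∀ n : ℕ,
      (1 / ((n : ℝ) + 2)) * ((x * q) ^ (n + 1) - q ^ (n + 1)) / (1 - q ^ (n + 1))
        - (1 / ((n : ℝ) + 2)) * (x ^ (n + 1) - q ^ (n + 1)) / (1 - q ^ (n + 1))
      = -(x ^ (n + 1) / ((n : ℝ) + 2)) := fun n => by
    have hqn : q ^ (n + 1) < 1 := pow_lt_one₀ hq0.le hq1 (Nat.succ_ne_zero n)
    have hden : 1 - q ^ (n + 1) ≠ 0 := by linarith
    rw [mul_pow]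
    generalize q ^ (n + 1) = y at *
    field_simp
    ring
  simp only [hterm, (hasSum_mercator_tail hx0 hx1).tsum_eq] at hseries
  rw [sub_eq_iff_eq_add.mp hseries]
  have h1q : 1 - q ≠ 0 := by linarith
  field_simp
  ring

lemma Fq_one {q : ℝ} (hq0 : 0 < q) : Fq q 1 = 0 := by
  simp [Fq, Real.rpow_neg_one, hq0.ne']

/-- For `0 < q < 1`: for all real `z > 0`,
`F_q(z+1) = F_q(z) + q^{−z}(log [z]_q − z log q)` and `F_q(1) = 0`; equivalently,
`Γ̃_q(z+1) = (q^{−z}[z]_q)^{q^{−z}} Γ̃_q(z)` and `Γ̃_q(1) = 1`. -/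
theorem Fq_ladder_and_one (q : ℝ) (hq0 : 0 < q) (hq1 : q < 1) :
    (∀ z : ℝ, 0 < z →
      Fq q (z + 1)
        = Fq q z + q ^ (-z) * (Real.log ((1 - q ^ z) / (1 - q)) - z * Real.log q)) ∧
    Fq q 1 = 0 ∧
    (∀ z : ℝ, 0 < z →
      GammaQ q (z + 1)
        = (q ^ (-z) * ((1 - q ^ z) / (1 - q))) ^ (q ^ (-z)) * GammaQ q z) ∧
    GammaQ q 1 = 1 := by
  refine ⟨fun z hz => Fq_ladder hq0 hq1 hz, Fq_one hq0, fun z hz => ?_, ?_⟩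
  · have hx0 : 0 < q ^ (-z) := Real.rpow_pos_of_pos hq0 _
    have hb : 0 < (1 - q ^ z) / (1 - q) :=
      div_pos (by linarith [Real.rpow_lt_one hq0.le hq1 hz]) (by linarith)
    rw [GammaQ, GammaQ, Fq_ladder hq0 hq1 hz, Real.rpow_def_of_pos (mul_pos hx0 hb),
      Real.log_mul hx0.ne' hb.ne', Real.log_rpow hq0, ← Real.exp_add]
    congr 1
    ring
  · rw [GammaQ, Fq_one hq0, Real.exp_zero]
end

section
/- Let q be real with 0 < q < 1. Then the function z ↦ F_q(z+1) = log Γ̃_q(z+1) is convex on the interval [0, ∞). -/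
theorem convexOn_exp_mul (c : ℝ) (s : Set ℝ) (hs : Convex ℝ s) :
    ConvexOn ℝ s (fun z : ℝ => Real.exp (c * z)) := by
  refine ⟨hs, fun x _ y _ a b ha hb hab => ?_⟩
  have h := convexOn_exp.2 (Set.mem_univ (c * x)) (Set.mem_univ (c * y)) ha hb hab
  simp only [smul_eq_mul] at h ⊢
  convert h using 2
  ring

theorem convexOn_exp_mul_affine (q : ℝ) (hq0 : 0 < q) (hq1 : q < 1) :
    ConvexOn ℝ (Set.Ici (0 : ℝ))
      (fun z : ℝ => Real.exp (-Real.log q * z) * ((1 - q) * z - q)) := by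
  set L : ℝ := -Real.log q with hL
  have hLpos : 0 < L := by have := Real.log_neg hq0 hq1; linarith
  have hqL : q * L ≤ 1 - q := by
    have h := Real.log_le_sub_one_of_pos (inv_pos.mpr hq0)
    rw [Real.log_inv] at h
    have h2 := mul_le_mul_of_nonneg_left h hq0.le
    rw [mul_sub, mul_inv_cancel₀ hq0.ne'] at h2
    linarith
  have hexp : ∀ x : ℝ, HasDerivAt (fun z : ℝ => Real.exp (L * z)) (Real.exp (L * x) * L) x :=
    fun x => by simpa using ((hasDerivAt_id x).const_mul L).exp
  have haff : ∀ c d x : ℝ, HasDerivAt (fun z : ℝ => c * z + d) c x :=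
    fun c d x => by simpa using ((hasDerivAt_id x).const_mul c).add_const d
  have h1 : ∀ x : ℝ, HasDerivAt (fun z : ℝ => Real.exp (L * z) * ((1 - q) * z - q))
      (Real.exp (L * x) * (L * (1 - q) * x + (1 - q - L * q))) x := fun x => by
    have h := (hexp x).mul (haff (1 - q) (-q) x)
    exact (h.congr_deriv (by ring)).congr_of_eventuallyEq
      (.of_forall fun z => by simp [sub_eq_add_neg])
  have h2 : ∀ x : ℝ, HasDerivAt
      (fun x : ℝ => Real.exp (L * x) * (L * (1 - q) * x + (1 - q - L * q)))
      (Real.exp (L * x) * (L * (L * (1 - q) * x + (2 * (1 - q) - q * L)))) x := fun x => by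
    exact ((hexp x).mul (haff (L * (1 - q)) (1 - q - L * q) x)).congr_deriv (by ring)
  refine convexOn_of_hasDerivWithinAt2_nonneg (convex_Ici 0)
    (fun x _ => (h1 x).continuousAt.continuousWithinAt)
    (fun x _ => (h1 x).hasDerivWithinAt) (fun x _ => (h2 x).hasDerivWithinAt) ?_
  intro x hx
  have hx0 : 0 < x := by simpa using hx
  have ha : 0 < 1 - q := by linarith
  have : 0 ≤ 2 * (1 - q) - q * L := by linarith
  positivity

theorem convexOn_series (q : ℝ) (hq0 : 0 < q) (hq1 : q < 1) :
    ConvexOn ℝ (Set.Ici (0 : ℝ)) (fun z : ℝ => ∑' n : ℕ, (1 / ((n : ℝ) + 2)) *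
      (q ^ ((z + 1) * ((n : ℝ) + 1)) - q ^ ((n : ℝ) + 1)) / (1 - q ^ ((n : ℝ) + 1))) := by
  have hpow : ∀ n : ℕ, q ^ ((n : ℝ) + 1) = q * q ^ n := fun n => by
    rw [Real.rpow_add_one hq0.ne', Real.rpow_natCast, mul_comm]
  have hden : ∀ n : ℕ, 1 - q ≤ 1 - q ^ ((n : ℝ) + 1) := fun n => by
    rw [hpow]
    nlinarith [pow_le_one₀ hq0.le hq1.le (n := n)]
  have ha : 0 < 1 - q := by linarith
  have hsum : ∀ z ∈ Set.Ici (0 : ℝ), Summable (fun n : ℕ => (1 / ((n : ℝ) + 2)) *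
      (q ^ ((z + 1) * ((n : ℝ) + 1)) - q ^ ((n : ℝ) + 1)) / (1 - q ^ ((n : ℝ) + 1))) := by
    intro z hz
    have hz0 : 0 ≤ z := hz
    refine Summable.of_norm_bounded (g := fun n : ℕ => q / (1 - q) * q ^ n)
      ((summable_geometric_of_lt_one hq0.le hq1).mul_left _) fun n => ?_
    have hn : (0 : ℝ) ≤ n := n.cast_nonneg
    have hle : q ^ ((z + 1) * ((n : ℝ) + 1)) ≤ q ^ ((n : ℝ) + 1) :=
      Real.rpow_le_rpow_of_exponent_ge hq0 hq1.le (by nlinarith)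
    have hnn : 0 ≤ q ^ ((z + 1) * ((n : ℝ) + 1)) := Real.rpow_nonneg hq0.le _
    have hinv : 1 / ((n : ℝ) + 2) ≤ 1 := by
      rw [div_le_one (by positivity)]; linarith
    have habs : |q ^ ((z + 1) * ((n : ℝ) + 1)) - q ^ ((n : ℝ) + 1)| ≤ q ^ ((n : ℝ) + 1) := by
      rw [abs_le]; constructor <;> linarith
    rw [Real.norm_eq_abs, abs_div, abs_mul, abs_of_pos (ha.trans_le (hden n)),
      abs_of_nonneg (by positivity : 0 ≤ 1 / ((n : ℝ) + 2))]
    calc _ ≤ 1 * q ^ ((n : ℝ) + 1) / (1 - q) := by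
          gcongr ?_ / ?_
          · gcongr
          · exact hden n
      _ = _ := by rw [hpow]; ring
  have hterm : ∀ n : ℕ, ConvexOn ℝ (Set.Ici (0 : ℝ)) (fun z : ℝ => (1 / ((n : ℝ) + 2)) *
      (q ^ ((z + 1) * ((n : ℝ) + 1)) - q ^ ((n : ℝ) + 1)) / (1 - q ^ ((n : ℝ) + 1))) := by
    intro n
    have hd := ha.trans_le (hden n)
    set D := 1 - q ^ ((n : ℝ) + 1) with hD
    have hc : 0 ≤ 1 / ((n : ℝ) + 2) * q ^ ((n : ℝ) + 1) / D := by positivity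
    have h := ((convexOn_exp_mul (Real.log q * ((n : ℝ) + 1)) _ (convex_Ici 0)).smul hc).add_const
      (-(1 / ((n : ℝ) + 2) * q ^ ((n : ℝ) + 1) / D))
    refine h.congr fun z _ => ?_
    have : q ^ ((z + 1) * ((n : ℝ) + 1)) =
        q ^ ((n : ℝ) + 1) * Real.exp (Real.log q * ((n : ℝ) + 1) * z) := by
      rw [Real.rpow_def_of_pos hq0, Real.rpow_def_of_pos hq0, ← Real.exp_add]
      congr 1
      ring
    simp only [Pi.add_apply, smul_eq_mul, this]
    ring
  refine ⟨convex_Ici 0, fun x hx y hy a b ha hb hab => ?_⟩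
  have hsx := (hsum x hx).mul_left a
  have hsy := (hsum y hy).mul_left b
  simp only [smul_eq_mul]
  rw [← tsum_mul_left, ← tsum_mul_left, ← hsx.tsum_add hsy]
  refine Summable.tsum_le_tsum (fun n => ?_)
    (hsum _ (convex_Ici (0 : ℝ) hx hy ha hb hab)) (hsx.add hsy)
  exact (hterm n).2 hx hy ha hb hab

/-- For `0 < q < 1`, the function `z ↦ F_q(z+1) = log Γ̃_q(z+1)` is convex on `[0, ∞)`. -/
theorem convexOn_Fq_succ (q : ℝ) (hq0 : 0 < q) (hq1 : q < 1) :
    ConvexOn ℝ (Set.Ici (0 : ℝ)) (fun z : ℝ => Fq q (z + 1)) := by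
  have ha : 0 < 1 - q := by linarith
  have hlq : 0 < -Real.log q := by have := Real.log_neg hq0 hq1; linarith
  have hla : 0 < -Real.log (1 - q) := by
    have := Real.log_neg ha (by linarith); linarith
  have hA : 0 ≤ -Real.log q / (1 - q) ^ 2 := by positivity
  have hB : 0 ≤ -Real.log (1 - q) / (1 - q) := by positivity
  have hneg : ConvexOn ℝ (Set.Ici (0 : ℝ)) (fun z : ℝ => -z) :=
    (concaveOn_id (convex_Ici 0)).neg
  have h := ((((convexOn_series q hq0 hq1).add hneg).add
    ((convexOn_exp_mul_affine q hq0 hq1).smul hA)).add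
    ((convexOn_exp_mul (-Real.log q) _ (convex_Ici 0)).smul hB)).add_const
    (-Real.log q / (1 - q) ^ 2 * q + Real.log (1 - q) / (1 - q))
  refine h.congr fun z _ => ?_
  have e1 : q ^ (-(z + 1)) = Real.exp (-Real.log q * z) * q⁻¹ := by
    rw [show -(z + 1) = -z + -1 by ring, Real.rpow_add hq0, Real.rpow_neg_one,
      Real.rpow_def_of_pos hq0]
    congr 2
    ring
  have e2 : q ^ (1 - (z + 1)) = Real.exp (-Real.log q * z) := by
    rw [Real.rpow_def_of_pos hq0]
    congr 1
    ring
  simp only [Pi.add_apply, smul_eq_mul, Fq, e1, e2]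
  field_simp
  ring
end

section
/- Let q be real with 0 < q < 1 and let z ∈ ℂ with Re(z) > 0. Then, as s → 1 within the half-plane {s ∈ ℂ : Re(s) > 1}, the quantity ζ̃_q(s,z) − (q−1)/((s−1)·log q) tends to γ_q(z) := ∑_{n=1}^{∞} q^{nz}/[n]_q + (1−q)·(−z + 1/2 − log(1−q)/log q). -/
/-!
Put `x_n = q^(n+z)`, so that `‖x_n‖ = q^n ‖q^z‖ < 1`. The `n`-th term of `ζ̃_q(s,z)` is
`(1-q)^s q^((n+z)(s-1)) (1-x_n)^(-s)`, and writing `(1-x_n)^(-s) = 1 + ((1-x_n)^(-s) - 1)` splits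
the series into two parts.

* The constant part is the geometric series `q^(z(s-1)) / (1 - q^(s-1))`. It carries the pole, and
  the expansion `1/(1-e^u) = -1/u + 1/2 + O(u)` gives the constant term
  (`tendsto_geometric_part`).
* The remainder is dominated by a constant multiple of `q^n` for `s` near `1` with `Re s > 1`
  (`norm_remainder_le`), so it converges to `∑ x_n/(1-x_n)` by dominated convergence
  (`tendsto_remainder`). Expanding each `x_n/(1-x_n)` as a geometric series and interchanging the
  two summations turns this into `∑_{m ≥ 1} q^(mz)/(1-q^m)` (`tsum_lambert`).
-/

open Complex

/-- The `q`-Hurwitz zeta function `ζ̃_q(s,z) = ∑_{n≥0} q^{(n+z)(s−1)}/[n+z]_q^s`. -/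
noncomputable def tzetaQ (q : ℝ) (s z : ℂ) : ℂ :=
  ∑' n : ℕ, (q : ℂ) ^ (((n : ℂ) + z) * (s - 1)) / (qNum q ((n : ℂ) + z)) ^ s

/-- `γ_q(z) = ∑_{n=1}^∞ q^{nz}/[n]_q + (1−q)(−z + 1/2 − log(1−q)/log q)`. -/
noncomputable def gammaQz (q : ℝ) (z : ℂ) : ℂ :=
  (∑' n : ℕ, (q : ℂ) ^ (((n : ℕ) + 1 : ℂ) * z) / (((1 - q ^ ((n : ℕ) + 1)) / (1 - q) : ℝ) : ℂ))
    + ((1 - q : ℝ) : ℂ) * (-z + 1 / 2 - ((Real.log (1 - q) / Real.log q : ℝ) : ℂ))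

open Filter Topology

lemma tendsto_exp_sub_one_div :
    Tendsto (fun u : ℂ => (exp u - 1) / u) (𝓝[≠] 0) (𝓝 1) := by
  have h := (Complex.hasDerivAt_exp 0).tendsto_slope
  simp only [Complex.exp_zero] at h
  refine h.congr fun u => ?_
  simp [slope_def_field]

lemma tendsto_exp_second_order :
    Tendsto (fun u : ℂ => (exp u - 1 - u) / u ^ 2) (𝓝[≠] 0) (𝓝 (1 / 2)) := by
  rw [tendsto_iff_norm_sub_tendsto_zero]
  have hb : Tendsto (fun u : ℂ => ‖u‖ * Real.exp ‖u‖) (𝓝[≠] 0) (𝓝 0) := by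
    have : Continuous (fun u : ℂ => ‖u‖ * Real.exp ‖u‖) := by fun_prop
    simpa using (this.tendsto 0).mono_left nhdsWithin_le_nhds
  refine squeeze_zero' (Eventually.of_forall fun _ => norm_nonneg _) ?_ hb
  filter_upwards [self_mem_nhdsWithin] with u hu
  have hu : u ≠ 0 := hu
  have h := Complex.norm_exp_sub_sum_le_norm_mul_exp u 3
  simp only [Finset.sum_range_succ, Finset.sum_range_zero] at h
  norm_num [Nat.factorial] at h
  have e : (exp u - 1 - u) / u ^ 2 - 1 / 2 = (exp u - (1 + u + u ^ 2 / 2)) / u ^ 2 := by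
    field_simp; ring
  have hpos : 0 < ‖u‖ := norm_pos_iff.mpr hu
  rw [e, norm_div, norm_pow, div_le_iff₀ (by positivity)]
  calc _ ≤ _ := h
    _ = _ := by ring

/-- The constant term at `u = 0` of `1/(1-e^u) + 1/u`. -/
lemma tendsto_inv_one_sub_exp :
    Tendsto (fun u : ℂ => 1 / (1 - exp u) + 1 / u) (𝓝[≠] 0) (𝓝 (1 / 2)) := by
  have h := tendsto_exp_second_order.div tendsto_exp_sub_one_div one_ne_zero
  rw [div_one] at h
  refine h.congr' ?_
  have hne : ∀ᶠ u : ℂ in 𝓝[≠] 0, (exp u - 1) / u ≠ 0 :=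
    tendsto_exp_sub_one_div.eventually_ne one_ne_zero
  filter_upwards [self_mem_nhdsWithin, hne] with u hu h1
  have hu : u ≠ 0 := hu
  have h2 : exp u - 1 ≠ 0 := fun h => h1 (by simp [h])
  have h3 : 1 - exp u ≠ 0 := fun h => h2 (by linear_combination -h)
  simp only [Pi.div_apply]
  field_simp
  ring

/-- The constant term of the pole part: with `L = log q` and `t = s - 1`,
`e^(at)/(1-e^(tL)) = -1/(tL) + 1/2 - a/L + o(1)`. -/
lemma tendsto_geometric_part (a L : ℂ) (hL : L ≠ 0) :
    Tendsto (fun t : ℂ => exp (a * t) / (1 - exp (t * L)) + 1 / (t * L)) (𝓝[≠] 0)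
      (𝓝 (1 / 2 - a / L)) := by
  have hu : Tendsto (fun t : ℂ => t * L) (𝓝[≠] 0) (𝓝[≠] 0) := by
    refine tendsto_nhdsWithin_iff.mpr ⟨?_, ?_⟩
    · have : Continuous fun t : ℂ => t * L := by fun_prop
      simpa using (this.tendsto 0).mono_left nhdsWithin_le_nhds
    · filter_upwards [self_mem_nhdsWithin] with t ht
      exact mul_ne_zero ht hL
  have h1 := tendsto_inv_one_sub_exp.comp hu
  have h2 := tendsto_exp_sub_one_div.comp hu
  have h3 : Tendsto (fun t : ℂ => (exp (a * t) - 1) / t) (𝓝[≠] 0) (𝓝 a) := by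
    have hd : HasDerivAt (fun t : ℂ => exp (a * t)) a 0 := by
      have := ((hasDerivAt_id (0 : ℂ)).const_mul a).cexp
      simpa using this
    refine hd.tendsto_slope.congr fun u => ?_
    simp [slope_def_field]
  have h4 := h1.sub ((h3.div h2 one_ne_zero).div_const L)
  rw [div_one] at h4
  refine h4.congr' ?_
  filter_upwards [self_mem_nhdsWithin, h2.eventually_ne one_ne_zero] with t ht h5
  have ht : t ≠ 0 := ht
  have h6 : exp (t * L) - 1 ≠ 0 := fun h => h5 (by simp [h])
  have h7 : 1 - exp (t * L) ≠ 0 := fun h => h6 (by linear_combination -h)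
  have h8 : (exp (a * t) - 1) / t / ((exp (t * L) - 1) / (t * L)) / L
      = - ((exp (a * t) - 1) / (1 - exp (t * L))) := by
    rw [← neg_sub 1 (exp (t * L))]
    field_simp
  simp only [Function.comp_apply, Pi.div_apply]
  rw [h8]
  ring

/-- The Lambert-type rearrangement
`∑_{n ≥ 0} q^n Z/(1 - q^n Z) = ∑_{m ≥ 1} Z^m/(1-q^m)`, for `‖Z‖ < 1`. -/
lemma tsum_lambert (q : ℝ) (hq0 : 0 < q) (hq1 : q < 1) (Z : ℂ) (hZ : ‖Z‖ < 1) :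
    ∑' n : ℕ, ((q : ℂ) ^ n * Z) / (1 - (q : ℂ) ^ n * Z)
      = ∑' m : ℕ, Z ^ (m + 1) / (1 - (q : ℂ) ^ (m + 1)) := by
  have hqn : ‖(q : ℂ)‖ = q := by simp [abs_of_pos hq0]
  have hsum : Summable (Function.uncurry fun n m : ℕ => ((q : ℂ) ^ n * Z) ^ (m + 1)) := by
    have hb : Summable fun p : ℕ × ℕ => q ^ p.1 * ‖Z‖ ^ p.2 :=
      (summable_geometric_of_lt_one hq0.le hq1).mul_of_nonneg
        (summable_geometric_of_lt_one (norm_nonneg Z) hZ)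
        (fun _ => by positivity) (fun _ => by positivity)
    refine Summable.of_norm_bounded hb fun p => ?_
    simp only [Function.uncurry, norm_pow, norm_mul, hqn, mul_pow]
    have h1 : (q ^ p.1) ^ (p.2 + 1) ≤ q ^ p.1 :=
      pow_le_of_le_one (by positivity) (pow_le_one₀ hq0.le hq1.le) (by simp)
    have h2 : ‖Z‖ ^ (p.2 + 1) ≤ ‖Z‖ ^ p.2 :=
      pow_le_pow_of_le_one (norm_nonneg _) hZ.le (by simp)
    exact mul_le_mul h1 h2 (by positivity) (by positivity)
  have hl : ∀ n : ℕ, ∑' m : ℕ, ((q : ℂ) ^ n * Z) ^ (m + 1)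
      = ((q : ℂ) ^ n * Z) / (1 - (q : ℂ) ^ n * Z) := fun n => by
    have hx : ‖(q : ℂ) ^ n * Z‖ < 1 := by
      rw [norm_mul, norm_pow, hqn]
      exact (mul_le_of_le_one_left (norm_nonneg _) (pow_le_one₀ hq0.le hq1.le)).trans_lt hZ
    simp_rw [pow_succ]
    rw [tsum_mul_right, tsum_geometric_of_norm_lt_one hx]
    ring
  have hr : ∀ m : ℕ, ∑' n : ℕ, ((q : ℂ) ^ n * Z) ^ (m + 1)
      = Z ^ (m + 1) / (1 - (q : ℂ) ^ (m + 1)) := fun m => by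
    have hx : ‖(q : ℂ) ^ (m + 1)‖ < 1 := by
      rw [norm_pow, hqn]
      exact pow_lt_one₀ hq0.le hq1 (by simp)
    simp_rw [mul_pow, ← pow_mul, mul_comm _ (m + 1), pow_mul]
    rw [tsum_mul_right, tsum_geometric_of_norm_lt_one hx]
    ring
  simp_rw [← hl, ← hr]
  exact hsum.tsum_comm.symm

lemma norm_one_sub_cpow_neg_sub_one_le (r : ℝ) (hr : r < 1) (x s : ℂ) (hx : ‖x‖ ≤ r)
    (hs : ‖s‖ ≤ 2) :
    ‖(1 - x) ^ (-s) - 1‖ ≤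
      ‖x‖ * (2 * (1 + (1 - r)⁻¹) * Real.exp (2 * (1 + (1 - r)⁻¹))) := by
  have hr0 : 0 ≤ r := (norm_nonneg x).trans hx
  have hx1 : ‖x‖ < 1 := hx.trans_lt hr
  have h1r : 0 < 1 - r := by linarith
  set K : ℝ := 1 + (1 - r)⁻¹ with hK
  have hKpos : 0 < K := by positivity
  have hne : 1 - x ≠ 0 := by
    intro h
    have : x = 1 := by linear_combination -h
    simp [this] at hx1
  have hlog : ‖log (1 - x)‖ ≤ ‖x‖ * K := by
    have h := Complex.norm_log_one_add_le (z := -x) (by simpa using hx1)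
    rw [norm_neg, ← sub_eq_add_neg] at h
    refine h.trans ?_
    have h2 : (1 - ‖x‖)⁻¹ ≤ (1 - r)⁻¹ := by gcongr
    have h3 : ‖x‖ ^ 2 * (1 - ‖x‖)⁻¹ ≤ ‖x‖ * (1 - r)⁻¹ := by
      have : ‖x‖ ^ 2 ≤ ‖x‖ := by nlinarith [norm_nonneg x]
      have h0 : 0 ≤ (1 - ‖x‖)⁻¹ := inv_nonneg.mpr (by linarith)
      exact mul_le_mul this h2 h0 (norm_nonneg _)
    have h4 : 0 ≤ ‖x‖ * (1 - r)⁻¹ := by positivity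
    rw [hK]
    linarith
  rw [Complex.cpow_def_of_ne_zero hne]
  set w := log (1 - x) * -s with hw
  have hw1 : ‖w‖ ≤ ‖x‖ * (2 * K) := by
    rw [hw, norm_mul, norm_neg]
    calc _ ≤ (‖x‖ * K) * 2 := by gcongr
      _ = _ := by ring
  have hw2 : ‖w‖ ≤ 2 * K := hw1.trans (mul_le_of_le_one_left (by positivity) hx1.le)
  have h := Complex.norm_exp_sub_sum_le_norm_mul_exp w 1
  simp only [Finset.sum_range_one, pow_zero, Nat.factorial_zero, Nat.cast_one, div_one,
    pow_one] at h
  calc _ ≤ _ := h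
    _ ≤ (‖x‖ * (2 * K)) * Real.exp (2 * K) := by gcongr
    _ = _ := by ring

lemma norm_q_cpow_le (q : ℝ) (hq0 : 0 < q) (hq1 : q < 1) (z s : ℂ) (hz : 0 < z.re)
    (hs : 1 < s.re) (hs2 : ‖s‖ ≤ 2) (n : ℕ) :
    ‖(q : ℂ) ^ (((n : ℂ) + z) * (s - 1))‖ ≤ Real.exp (-Real.log q * (|z.im| * 2)) := by
  have hL : Real.log q < 0 := Real.log_neg hq0 hq1
  rw [Complex.norm_cpow_eq_rpow_re_of_pos hq0, Real.rpow_def_of_pos hq0]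
  apply Real.exp_le_exp.mpr
  have h1 : (((n : ℂ) + z) * (s - 1)).re = (n + z.re) * (s.re - 1) - z.im * s.im := by
    simp
  rw [h1]
  have h2 : 0 ≤ ((n : ℝ) + z.re) * (s.re - 1) :=
    mul_nonneg (by positivity) (by linarith)
  have h3 : z.im * s.im ≤ |z.im| * 2 := by
    calc _ ≤ |z.im * s.im| := le_abs_self _
      _ = |z.im| * |s.im| := abs_mul _ _
      _ ≤ _ := by gcongr; exact (Complex.abs_im_le_norm s).trans hs2
  nlinarith

lemma q_cpow_nat_add (q : ℝ) (hq0 : 0 < q) (z : ℂ) (n : ℕ) :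
    (q : ℂ) ^ ((n : ℂ) + z) = (q : ℂ) ^ n * (q : ℂ) ^ z := by
  rw [Complex.cpow_add _ _ (by exact_mod_cast hq0.ne'), Complex.cpow_natCast]

lemma norm_q_cpow_lt_one_s16 (q : ℝ) (hq0 : 0 < q) (hq1 : q < 1) (z : ℂ) (hz : 0 < z.re) :
    ‖(q : ℂ) ^ z‖ < 1 := by
  rw [Complex.norm_cpow_eq_rpow_re_of_pos hq0]
  exact Real.rpow_lt_one hq0.le hq1 hz

/-- What is left of the `n`-th term of `ζ̃_q(s,z)/(1-q)^s` after removing the geometric term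
`q^((n+z)(s-1))`. -/
noncomputable def remainder (q : ℝ) (z s : ℂ) (n : ℕ) : ℂ :=
  (q : ℂ) ^ (((n : ℂ) + z) * (s - 1)) * ((1 - (q : ℂ) ^ ((n : ℂ) + z)) ^ (-s) - 1)

lemma norm_q_cpow_nat_add (q : ℝ) (hq0 : 0 < q) (z : ℂ) (n : ℕ) :
    ‖(q : ℂ) ^ ((n : ℂ) + z)‖ = q ^ n * ‖(q : ℂ) ^ z‖ := by
  rw [q_cpow_nat_add q hq0, norm_mul, norm_pow, Complex.norm_real, Real.norm_of_nonneg hq0.le]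

/-- Domination of the remainder by a geometric sequence, uniformly over `Re s > 1`, `‖s‖ ≤ 2`. -/
lemma norm_remainder_le (q : ℝ) (hq0 : 0 < q) (hq1 : q < 1) (z : ℂ) (hz : 0 < z.re) :
    ∃ C : ℝ, ∀ s : ℂ, 1 < s.re → ‖s‖ ≤ 2 → ∀ n, ‖remainder q z s n‖ ≤ C * q ^ n := by
  have hr := norm_q_cpow_lt_one_s16 q hq0 hq1 z hz
  set r := ‖(q : ℂ) ^ z‖ with hrdef
  have h1r : 0 < 1 - r := by linarith
  refine ⟨Real.exp (-Real.log q * (|z.im| * 2)) *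
    (2 * (1 + (1 - r)⁻¹) * Real.exp (2 * (1 + (1 - r)⁻¹))), fun s hs hs2 n => ?_⟩
  have hxn : ‖(q : ℂ) ^ ((n : ℂ) + z)‖ = q ^ n * r := norm_q_cpow_nat_add q hq0 z n
  have hr0 : 0 ≤ r := norm_nonneg _
  have hx : ‖(q : ℂ) ^ ((n : ℂ) + z)‖ ≤ r := by
    rw [hxn]
    exact mul_le_of_le_one_left hr0 (pow_le_one₀ hq0.le hq1.le)
  have hx' : ‖(q : ℂ) ^ ((n : ℂ) + z)‖ ≤ q ^ n := by
    rw [hxn]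
    exact mul_le_of_le_one_right (by positivity) hr.le
  rw [remainder, norm_mul]
  calc _ ≤ Real.exp (-Real.log q * (|z.im| * 2)) *
        (q ^ n * (2 * (1 + (1 - r)⁻¹) * Real.exp (2 * (1 + (1 - r)⁻¹)))) := by
        refine mul_le_mul (norm_q_cpow_le q hq0 hq1 z s hz hs hs2 n) ?_ (norm_nonneg _)
          (Real.exp_pos _).le
        refine (norm_one_sub_cpow_neg_sub_one_le r hr _ s hx hs2).trans ?_
        gcongr
    _ = _ := by ring

lemma one_sub_q_cpow_ne_zero (q : ℝ) (hq0 : 0 < q) (hq1 : q < 1) (w : ℂ) (hw : 0 < w.re) :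
    1 - (q : ℂ) ^ w ≠ 0 := by
  intro h
  have h1 := norm_q_cpow_lt_one_s16 q hq0 hq1 w hw
  rw [show (q : ℂ) ^ w = 1 by linear_combination -h] at h1
  simp at h1

lemma eventually_norm_le_two :
    ∀ᶠ s : ℂ in 𝓝[{s : ℂ | 1 < s.re}] 1, ‖s‖ ≤ 2 := by
  have : ∀ᶠ s : ℂ in 𝓝 1, ‖s‖ < 2 :=
    (continuous_norm.tendsto (1 : ℂ)).eventually_lt_const (by norm_num)
  exact (this.filter_mono nhdsWithin_le_nhds).mono fun _ h => h.le

lemma tendsto_remainder (q : ℝ) (hq0 : 0 < q) (hq1 : q < 1) (z : ℂ) (hz : 0 < z.re) :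
    Tendsto (fun s => ∑' n, remainder q z s n) (𝓝[{s : ℂ | 1 < s.re}] 1)
      (𝓝 (∑' n : ℕ, ((q : ℂ) ^ n * (q : ℂ) ^ z) / (1 - (q : ℂ) ^ n * (q : ℂ) ^ z))) := by
  obtain ⟨C, hC⟩ := norm_remainder_le q hq0 hq1 z hz
  refine tendsto_tsum_of_dominated_convergence (bound := fun n => C * q ^ n)
    ((summable_geometric_of_lt_one hq0.le hq1).mul_left C) (fun n => ?_) ?_
  · have hqne : (q : ℂ) ≠ 0 := by exact_mod_cast hq0.ne'
    have hne := one_sub_q_cpow_ne_zero q hq0 hq1 (n + z) (by simp; positivity)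
    have hc : Continuous fun s => remainder q z s n := by
      unfold remainder
      refine Continuous.mul ?_ (Continuous.sub ?_ continuous_const)
      · exact Continuous.const_cpow (by fun_prop) (Or.inl hqne)
      · exact Continuous.const_cpow (by fun_prop) (Or.inl hne)
    have h := (hc.tendsto 1).mono_left (nhdsWithin_le_nhds (s := {s : ℂ | 1 < s.re}))
    convert h using 2
    rw [remainder, Complex.cpow_neg_one, ← q_cpow_nat_add q hq0]
    simp only [sub_self, mul_zero, Complex.cpow_zero, one_mul]
    field_simp
    ring
  · filter_upwards [self_mem_nhdsWithin, eventually_norm_le_two] with s hs hs2 n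
    exact hC s hs hs2 n

lemma hasSum_q_cpow (q : ℝ) (hq0 : 0 < q) (hq1 : q < 1) (z t : ℂ) (ht : 0 < t.re) :
    HasSum (fun n : ℕ => (q : ℂ) ^ (((n : ℂ) + z) * t))
      ((q : ℂ) ^ (z * t) / (1 - (q : ℂ) ^ t)) := by
  have hqne : (q : ℂ) ≠ 0 := by exact_mod_cast hq0.ne'
  have h := (hasSum_geometric_of_norm_lt_one (norm_q_cpow_lt_one_s16 q hq0 hq1 t ht)).mul_left
    ((q : ℂ) ^ (z * t))
  rw [← div_eq_mul_inv] at h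
  refine h.congr_fun fun n => ?_
  rw [add_mul, Complex.cpow_add _ _ hqne, Complex.cpow_nat_mul, mul_comm]

lemma tzetaQ_eq (q : ℝ) (hq0 : 0 < q) (hq1 : q < 1) (z s : ℂ) (hz : 0 < z.re)
    (hs : 1 < s.re) (hs2 : ‖s‖ ≤ 2) :
    tzetaQ q s z = ((1 - q : ℝ) : ℂ) ^ s *
      ((q : ℂ) ^ (z * (s - 1)) / (1 - (q : ℂ) ^ (s - 1)) + ∑' n, remainder q z s n) := by
  obtain ⟨C, hC⟩ := norm_remainder_le q hq0 hq1 z hz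
  have hsum : Summable (remainder q z s) :=
    Summable.of_norm_bounded ((summable_geometric_of_lt_one hq0.le hq1).mul_left C)
      (hC s hs hs2)
  have hgeo := hasSum_q_cpow q hq0 hq1 z (s - 1) (by simpa using hs)
  have h1q : 0 < 1 - q := by linarith
  rw [← hgeo.tsum_eq, ← hgeo.summable.tsum_add hsum, ← tsum_mul_left, tzetaQ]
  refine tsum_congr fun n => ?_
  have hne := one_sub_q_cpow_ne_zero q hq0 hq1 (n + z) (by simp; positivity)
  -- The principal power of `[n+z]_q` splits because the denominator `1 - q` is a positive real.
  have hpow : (qNum q ((n : ℂ) + z)) ^ s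
      = (1 - (q : ℂ) ^ ((n : ℂ) + z)) ^ s / ((1 - q : ℝ) : ℂ) ^ s := by
    have e : qNum q ((n : ℂ) + z)
        = (((1 - q)⁻¹ : ℝ) : ℂ) * (1 - (q : ℂ) ^ ((n : ℂ) + z)) := by
      rw [qNum]; push_cast; ring
    have hc : ((1 - q : ℝ) : ℂ) ≠ 0 := by exact_mod_cast h1q.ne'
    have hi : (((1 - q)⁻¹ : ℝ) : ℂ) ≠ 0 := by exact_mod_cast (inv_pos.mpr h1q).ne'
    rw [e, Complex.cpow_def_of_ne_zero (mul_ne_zero hi hne), Complex.cpow_def_of_ne_zero hne,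
      Complex.cpow_def_of_ne_zero hc, Complex.log_ofReal_mul (inv_pos.mpr h1q) hne,
      Real.log_inv, ← Complex.ofReal_log h1q.le, ← Complex.exp_sub]
    push_cast
    ring_nf
  rw [hpow, remainder, Complex.cpow_neg]
  have h2 : (1 - (q : ℂ) ^ ((n : ℂ) + z)) ^ s ≠ 0 := by
    simp [Complex.cpow_eq_zero_iff, hne]
  field_simp
  ring

/-- For `0 < q < 1` and `Re z > 0`: as `s → 1` within the half-plane `Re s > 1`,
`ζ̃_q(s,z) − (q−1)/((s−1) log q)` tends to `γ_q(z)`. -/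
theorem tendsto_tzetaQ_sub_pole (q : ℝ) (hq0 : 0 < q) (hq1 : q < 1) (z : ℂ)
    (hz : 0 < z.re) :
    Filter.Tendsto
      (fun s : ℂ => tzetaQ q s z - ((q : ℂ) - 1) / ((s - 1) * ((Real.log q : ℝ) : ℂ)))
      (nhdsWithin 1 {s : ℂ | 1 < s.re}) (nhds (gammaQz q z)) := by
  have h1q : 0 < 1 - q := by linarith
  have hqne : (q : ℂ) ≠ 0 := by exact_mod_cast hq0.ne'
  have hcne : ((1 - q : ℝ) : ℂ) ≠ 0 := by exact_mod_cast h1q.ne'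
  have hL : ((Real.log q : ℝ) : ℂ) ≠ 0 := by
    exact_mod_cast (Real.log_neg hq0 hq1).ne
  have hlogq : Complex.log (q : ℂ) = ((Real.log q : ℝ) : ℂ) := (Complex.ofReal_log hq0.le).symm
  have hlogc : Complex.log ((1 - q : ℝ) : ℂ) = ((Real.log (1 - q) : ℝ) : ℂ) :=
    (Complex.ofReal_log h1q.le).symm
  have ht : Tendsto (fun s : ℂ => s - 1) (𝓝[{s : ℂ | 1 < s.re}] 1) (𝓝[≠] 0) := by
    refine tendsto_nhdsWithin_iff.mpr ⟨?_, ?_⟩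
    · have : Continuous fun s : ℂ => s - 1 := by fun_prop
      simpa using (this.tendsto 1).mono_left nhdsWithin_le_nhds
    · filter_upwards [self_mem_nhdsWithin] with s hs h
      have hs : 1 < s.re := hs
      have h : s - 1 = 0 := h
      rw [show s = 1 by linear_combination h] at hs
      simp at hs
  -- The factor `(1-q)^(s-1)` is absorbed into the exponential of the geometric part.
  have hA := ((tendsto_geometric_part
    (((Real.log (1 - q) : ℝ) : ℂ) + z * ((Real.log q : ℝ) : ℂ)) _ hL).comp ht).const_mul
      ((1 - q : ℝ) : ℂ)
  have hB : Tendsto (fun s : ℂ => ((1 - q : ℝ) : ℂ) ^ s) (𝓝[{s : ℂ | 1 < s.re}] 1)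
      (𝓝 ((1 - q : ℝ) : ℂ)) := by
    have : Continuous fun s : ℂ => ((1 - q : ℝ) : ℂ) ^ s :=
      Continuous.const_cpow continuous_id (Or.inl hcne)
    simpa using (this.tendsto 1).mono_left nhdsWithin_le_nhds
  have hlim := hA.add (hB.mul (tendsto_remainder q hq0 hq1 z hz))
  have hval : gammaQz q z = ((1 - q : ℝ) : ℂ) *
      (1 / 2 - (((Real.log (1 - q) : ℝ) : ℂ) + z * ((Real.log q : ℝ) : ℂ)) /
        ((Real.log q : ℝ) : ℂ)) + ((1 - q : ℝ) : ℂ) *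
      ∑' n : ℕ, ((q : ℂ) ^ n * (q : ℂ) ^ z) / (1 - (q : ℂ) ^ n * (q : ℂ) ^ z) := by
    rw [tsum_lambert q hq0 hq1 _ (norm_q_cpow_lt_one_s16 q hq0 hq1 z hz), ← tsum_mul_left, gammaQz,
      add_comm]
    congr 1
    · rw [Complex.ofReal_div, add_div, mul_div_cancel_right₀ _ hL]
      ring
    · refine tsum_congr fun m => ?_
      have e : (q : ℂ) ^ (((m : ℂ) + 1) * z) = ((q : ℂ) ^ z) ^ (m + 1) := by
        rw [← Complex.cpow_nat_mul]; push_cast; rfl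
      rw [e, Complex.ofReal_div, div_div_eq_mul_div]
      push_cast
      ring
  rw [hval]
  refine hlim.congr' ?_
  filter_upwards [self_mem_nhdsWithin, eventually_norm_le_two] with s hs hs2
  have hs : 1 < s.re := hs
  rw [tzetaQ_eq q hq0 hq1 z s hz hs hs2]
  have e1 : ((1 - q : ℝ) : ℂ) ^ s * (q : ℂ) ^ (z * (s - 1)) = ((1 - q : ℝ) : ℂ) *
      exp ((((Real.log (1 - q) : ℝ) : ℂ) + z * ((Real.log q : ℝ) : ℂ)) * (s - 1)) := by
    have : ((1 - q : ℝ) : ℂ) ^ s = ((1 - q : ℝ) : ℂ) * ((1 - q : ℝ) : ℂ) ^ (s - 1) := by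
      rw [Complex.cpow_sub _ _ hcne, Complex.cpow_one]; field_simp
    rw [this, Complex.cpow_def_of_ne_zero hcne, Complex.cpow_def_of_ne_zero hqne, hlogq, hlogc,
      mul_assoc, ← Complex.exp_add]
    ring_nf
  have e2 : (q : ℂ) ^ (s - 1) = exp ((s - 1) * ((Real.log q : ℝ) : ℂ)) := by
    rw [Complex.cpow_def_of_ne_zero hqne, hlogq, mul_comm]
  simp only [Function.comp_apply]
  rw [mul_add (((1 - q : ℝ) : ℂ) ^ s), ← mul_div_assoc, e1, e2]
  push_cast
  ring
end
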